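/- Suppose h(u) > 0 for all u ∈ [0,1] and H(1) ≤ (k(p) ∫₀¹ D(u)^{p'−1} g(u) du)^{1/p'}. Then there exists a unique c* > −h_m such that the traveling-wave problem with speed c* admits a solution, and this unique speed satisfies c* > 0 > −h_m. -/

import Mathlib

open Set MeasureTheory Filter

/-- The conjugate exponent `p' = p/(p-1)`. -/
noncomputable def pconj (p : ℝ) : ℝ := p / (p - 1)

/-- The constant `k(p)` from the paper. -/
noncomputable def kfun (p : ℝ) : ℝ :=
  if p < 2 then 1 / (2 ^ (pconj p - 1) - 1)
  else if p = 2 then 1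
  else pconj p / (pconj p - 1 +
    (1 + pconj p * (pconj p - 1) ^ ((1 : ℝ) / (pconj p - 2)) +
      (pconj p - 1) ^ (pconj p / (pconj p - 2))) /
    (1 + (pconj p - 1) ^ ((1 : ℝ) / (pconj p - 2))) ^ pconj p)

/-- Standing assumptions on the data `p, θ, D, H, h, g` (combustion setting). -/
structure CombSetup (p θ : ℝ) (D H h g : ℝ → ℝ) : Prop where
  hp : 1 < p
  hθ0 : 0 < θ
  hθ1 : θ < 1
  hD : ContDiffOn ℝ 1 D (Ioo 0 1)
  hDpos : ∀ v ∈ Ioo (0 : ℝ) 1, 0 < D v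
  hH : ContDiffOn ℝ 1 H (Icc 0 1)
  hH0 : H 0 = 0
  hh : ContinuousOn h (Icc 0 1)
  hHd : ∀ v ∈ Icc (0 : ℝ) 1, HasDerivWithinAt H (h v) (Icc 0 1) v
  hgc : ContinuousOn g (Icc 0 1)
  hg0 : ∀ v ∈ Icc (0 : ℝ) θ, g v = 0
  hgpos : ∀ v ∈ Ioo θ 1, 0 < g v
  hg1 : g 1 = 0
  hInt : IntegrableOn (fun v => D v ^ (pconj p - 1) * g v) (Ioo 0 1)

/-- The diffusive flux `ξ ↦ D(u(ξ)) |u'(ξ)|^{p-2} u'(ξ)`. -/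
noncomputable def flux (p : ℝ) (D u : ℝ → ℝ) : ℝ → ℝ :=
  fun ξ => D (u ξ) * (|deriv u ξ| ^ (p - 2) * deriv u ξ)

/-- Solution of the traveling-wave problem with speed `c`. -/
structure IsTWSol (p c : ℝ) (D h g : ℝ → ℝ) (u : ℝ → ℝ) : Prop where
  cont : Continuous u
  mem : ∀ ξ, u ξ ∈ Icc (0 : ℝ) 1
  smooth : ContDiffOn ℝ 1 u {ξ | u ξ ∈ Ioo (0 : ℝ) 1}
  eqn : ∀ ξ ∈ {ξ | u ξ ∈ Ioo (0 : ℝ) 1},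
    HasDerivAt (flux p D u) (-(c + h (u ξ)) * deriv u ξ - g (u ξ)) ξ
  flux_cont : Continuous (fun ξ => if u ξ ∈ Ioo (0 : ℝ) 1 then flux p D u ξ else 0)
  flux_to0 : ∀ ε > 0, ∃ δ > 0, ∀ ξ, u ξ ∈ Ioo (0 : ℝ) 1 → u ξ < δ → |flux p D u ξ| < ε
  flux_to1 : ∀ ε > 0, ∃ δ > 0, ∀ ξ, u ξ ∈ Ioo (0 : ℝ) 1 → 1 - δ < u ξ → |flux p D u ξ| < ε
  lim_bot : Tendsto u atBot (nhds 1)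
  lim_top : Tendsto u atTop (nhds 0)

/-- Positive solution of the first-order problem with parameter `c`. -/
structure IsFOSol (p c : ℝ) (D h g : ℝ → ℝ) (y : ℝ → ℝ) : Prop where
  cont : ContinuousOn y (Icc 0 1)
  eqn : ∀ v ∈ Ioo (0 : ℝ) 1, HasDerivAt y
    (pconj p * ((c + h v) * (max (y v) 0) ^ (1 / p) - D v ^ (pconj p - 1) * g v)) v
  y0 : y 0 = 0
  y1 : y 1 = 0
  pos : ∀ v ∈ Ioo (0 : ℝ) 1, 0 < y v

theorem image_right_nonpos_of_local_deriv_nonpos {e : ℝ → ℝ} {a b δ : ℝ} (hab : a ≤ b)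
    (hδ : 0 < δ) (hc : ContinuousOn e (Icc a b)) (ha : e a ≤ 0)
    (hd : ∀ x ∈ Ioo a b, 0 < e x → e x < δ → ∃ d, d ≤ 0 ∧ HasDerivAt e d x) : e b ≤ 0 := by
  by_contra! hb
  set t := min (e b) δ / 2 with ht
  have hm : 0 < min (e b) δ := lt_min hb hδ
  have ht0 : 0 < t := by positivity
  have htb : t ≤ e b := by linarith [min_le_left (e b) δ]
  have htδ : t < δ := by linarith [min_le_right (e b) δ]
  obtain ⟨β, ⟨hβ, hβt⟩, hβmin⟩ := (isCompact_Icc.of_isClosed_subset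
    (hc.preimage_isClosed_of_isClosed isClosed_Icc (isClosed_Ici (a := t)))
    inter_subset_left).exists_isLeast ⟨b, right_mem_Icc.2 hab, htb⟩
  have hc' : ContinuousOn e (Icc a β) := hc.mono (Icc_subset_Icc_right hβ.2)
  obtain ⟨α, ⟨hα, hαt⟩, hαmax⟩ := (isCompact_Icc.of_isClosed_subset
    (hc'.preimage_isClosed_of_isClosed isClosed_Icc (isClosed_Iic (a := t / 2)))
    inter_subset_left).exists_isGreatest
      ⟨a, left_mem_Icc.2 hβ.1, by simp only [mem_preimage, mem_Iic]; linarith⟩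
  simp only [mem_preimage, mem_Ici, mem_Iic] at hβt hαt
  have hdd : ∀ x ∈ Ioo α β, ∃ d, d ≤ 0 ∧ HasDerivAt e d x := by
    intro x hx
    have h1 : t / 2 < e x := by
      by_contra! h
      exact absurd (hαmax ⟨⟨hα.1.trans hx.1.le, hx.2.le⟩, h⟩) (not_le.2 hx.1)
    have h2 : e x < t := by
      by_contra! h
      exact absurd (hβmin ⟨⟨hα.1.trans hx.1.le, hx.2.le.trans hβ.2⟩, h⟩) (not_le.2 hx.2)
    exact hd x ⟨hα.1.trans_lt hx.1, hx.2.trans_le hβ.2⟩ (by linarith) (by linarith)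
  have hanti : AntitoneOn e (Icc α β) := by
    refine antitoneOn_of_deriv_nonpos (convex_Icc α β) (hc'.mono (Icc_subset_Icc_left hα.1)) ?_ ?_
    · rw [interior_Icc]
      intro x hx
      obtain ⟨d, -, h⟩ := hdd x hx
      exact h.differentiableAt.differentiableWithinAt
    · rw [interior_Icc]
      intro x hx
      obtain ⟨d, h0, h⟩ := hdd x hx
      rwa [h.deriv]
  have := hanti (left_mem_Icc.2 hα.2) (right_mem_Icc.2 hα.2) hα.2
  linarith

theorem image_left_nonpos_of_local_deriv_nonneg {e : ℝ → ℝ} {a b δ : ℝ} (hab : a ≤ b)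
    (hδ : 0 < δ) (hc : ContinuousOn e (Icc a b)) (hb : e b ≤ 0)
    (hd : ∀ x ∈ Ioo a b, 0 < e x → e x < δ → ∃ d, 0 ≤ d ∧ HasDerivAt e d x) : e a ≤ 0 := by
  have := image_right_nonpos_of_local_deriv_nonpos (e := fun x => e (-x)) (a := -b) (b := -a)
    (neg_le_neg hab) hδ
    (hc.comp continuous_neg.continuousOn fun x hx => ⟨by linarith [hx.2], by linarith [hx.1]⟩)
    (by simpa using hb) ?_
  · simpa using this
  · intro x hx h0 h1
    obtain ⟨d, hd0, hd⟩ := hd (-x) ⟨by linarith [hx.2], by linarith [hx.1]⟩ h0 h1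
    exact ⟨-d, by linarith, by simpa [Function.comp_def] using hd.scomp x (hasDerivAt_neg x)⟩

theorem exists_terminal_value_lipschitz {a G φ : ℝ → ℝ} {C : ℝ} {K : NNReal} (w₁ : ℝ)
    (ha : ContinuousOn a (Icc 0 1)) (hG : ContinuousOn G (Icc 0 1)) (hφ : LipschitzWith K φ)
    (hC : ∀ x, |φ x| ≤ C) :
    ∃ w : ℝ → ℝ, ContinuousOn w (Icc 0 1) ∧ w 1 = w₁ ∧
      ∀ v ∈ Ioo (0 : ℝ) 1, HasDerivAt w (a v * φ (w v - G v)) v := by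
  obtain ⟨A, hA⟩ := isCompact_Icc.exists_bound_of_continuousOn ha
  have hA0 : 0 ≤ A := (norm_nonneg _).trans (hA 0 (by simp))
  have hC0 : 0 ≤ C := (abs_nonneg _).trans (hC 0)
  lift A to NNReal using hA0
  lift C to NNReal using hC0
  have hPL : IsPicardLindelof (fun v x => a v * φ (x - G v)) (tmin := 0) (tmax := 1)
      ⟨1, by simp⟩ w₁ (A * C) 0 (A * C) (A * K) := by
    refine ⟨fun t ht => ?_, fun x _ => ?_, fun t ht x _ => ?_, by simp⟩
    · refine LipschitzWith.lipschitzOnWith (LipschitzWith.of_dist_le_mul fun x y => ?_)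
      have h1 := hφ.dist_le_mul (x - G t) (y - G t)
      rw [dist_sub_right] at h1
      rw [Real.dist_eq, ← mul_sub, abs_mul, ← Real.dist_eq, NNReal.coe_mul, mul_assoc]
      exact mul_le_mul (hA t ht) h1 dist_nonneg A.2
    · exact ha.mul (hφ.continuous.comp_continuousOn (continuousOn_const.sub hG))
    · rw [Real.norm_eq_abs, abs_mul, NNReal.coe_mul]
      exact mul_le_mul (hA t ht) (hC _) (abs_nonneg _) A.2
  obtain ⟨w, hw1, hw⟩ := hPL.exists_eq_forall_mem_Icc_hasDerivWithinAt₀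
  refine ⟨w, fun v hv => (hw v hv).continuousWithinAt, hw1, fun v hv => ?_⟩
  exact (hw v (Ioo_subset_Icc_self hv)).hasDerivAt (Icc_mem_nhds hv.1 hv.2)

theorem exists_terminal_value_of_monotone {a G φ : ℝ → ℝ} {ψ : ℕ → ℝ → ℝ} {ε : ℕ → ℝ} (w₁ : ℝ)
    (ha : ContinuousOn a (Icc 0 1)) (ha0 : ∀ v ∈ Icc (0 : ℝ) 1, 0 ≤ a v)
    (hG : ContinuousOn G (Icc 0 1)) (hφ : Monotone φ)
    (hψ : ∀ n, ∃ K, LipschitzWith K (ψ n)) (hψC : ∀ n, ∃ C, ∀ x, |ψ n x| ≤ C)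
    (hψφ : ∀ n x, |ψ n x - φ x| ≤ ε n) (hεa : Antitone ε) (hε : Tendsto ε atTop (nhds 0)) :
    ∃ w : ℝ → ℝ, ContinuousOn w (Icc 0 1) ∧ w 1 = w₁ ∧
      ∀ v ∈ Ioo (0 : ℝ) 1, HasDerivAt w (a v * φ (w v - G v)) v := by
  have hex : ∀ n, ∃ w : ℝ → ℝ, ContinuousOn w (Icc 0 1) ∧ w 1 = w₁ ∧
      ∀ v ∈ Ioo (0 : ℝ) 1, HasDerivAt w (a v * ψ n (w v - G v)) v := fun n => by
    obtain ⟨K, hK⟩ := hψ n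
    obtain ⟨C, hC⟩ := hψC n
    exact exists_terminal_value_lipschitz w₁ ha hG hK hC
  choose w hwc hw1 hw using hex
  obtain ⟨A, hA⟩ := isCompact_Icc.exists_bound_of_continuousOn ha
  have hA0 : 0 ≤ A := (norm_nonneg _).trans (hA 0 (by simp))
  have hε0 : ∀ n, 0 ≤ ε n := fun n => (abs_nonneg _).trans (hψφ n 0)
  have key : ∀ n m, ∀ v ∈ Icc (0 : ℝ) 1, w n v - w m v ≤ A * (ε n + ε m) := by
    intro n m v hv
    have h := image_left_nonpos_of_local_deriv_nonneg
      (e := fun x => w n x - w m x - A * (ε n + ε m) * (1 - x)) (δ := 1) hv.2 one_pos ?_ ?_ ?_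
    · have h1 : 0 ≤ A * (ε n + ε m) := mul_nonneg hA0 (add_nonneg (hε0 n) (hε0 m))
      nlinarith [hv.1]
    · exact (((hwc n).sub (hwc m)).sub (by fun_prop)).mono (Icc_subset_Icc_left hv.1)
    · simp [hw1]
    · intro x hx hpos _
      have hx' : x ∈ Ioo (0 : ℝ) 1 := ⟨hv.1.trans_lt hx.1, hx.2⟩
      have hxI := Ioo_subset_Icc_self hx'
      have hd := ((hw n x hx').sub (hw m x hx')).sub
        (((hasDerivAt_id x).const_sub 1).const_mul (A * (ε n + ε m)))
      refine ⟨_, ?_, hd⟩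
      have h0 : 0 ≤ A * (ε n + ε m) * (1 - x) :=
        mul_nonneg (mul_nonneg hA0 (add_nonneg (hε0 n) (hε0 m))) (by linarith [hx.2])
      have h1 : φ (w m x - G x) ≤ φ (w n x - G x) := hφ (by linarith)
      have h2 := abs_le.1 (hψφ n (w n x - G x))
      have h3 := abs_le.1 (hψφ m (w m x - G x))
      have h4 : a x ≤ A := (le_abs_self _).trans (hA x hxI)
      have h5 := ha0 x hxI
      have h6 : a x * (ψ m (w m x - G x) - ψ n (w n x - G x)) ≤ a x * (ε n + ε m) :=
        mul_le_mul_of_nonneg_left (by linarith) h5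
      have h7 : a x * (ε n + ε m) ≤ A * (ε n + ε m) :=
        mul_le_mul_of_nonneg_right h4 (add_nonneg (hε0 n) (hε0 m))
      linarith
  have key' : ∀ n m, ∀ v ∈ Icc (0 : ℝ) 1, dist (w n v) (w m v) ≤ A * (ε n + ε m) := by
    intro n m v hv
    rw [Real.dist_eq, abs_le]
    constructor
    · linarith [key m n v hv]
    · exact key n m v hv
  have hlim0 : Tendsto (fun n => A * (ε n + ε n)) atTop (nhds 0) := by
    simpa using (hε.add hε).const_mul A
  have hlim : ∀ v, ∃ L, v ∈ Icc (0 : ℝ) 1 → Tendsto (fun n => w n v) atTop (nhds L) := by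
    intro v
    by_cases hv : v ∈ Icc (0 : ℝ) 1
    · have hc : CauchySeq fun n => w n v := by
        refine cauchySeq_of_le_tendsto_0 (fun n => A * (ε n + ε n)) (fun n m N hn hm => ?_) hlim0
        exact (key' n m v hv).trans
          (mul_le_mul_of_nonneg_left (add_le_add (hεa hn) (hεa hm)) hA0)
      exact (cauchySeq_tendsto_of_complete hc).imp fun L hL _ => hL
    · exact ⟨0, fun h => absurd h hv⟩
  choose W hW using hlim
  have hU : TendstoUniformlyOn w W atTop (Icc 0 1) := by
    rw [Metric.tendstoUniformlyOn_iff]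
    intro η hη
    filter_upwards [hlim0.eventually (gt_mem_nhds hη)] with n hn v hv
    refine lt_of_le_of_lt ?_ hn
    refine le_of_tendsto ((hW v hv).dist tendsto_const_nhds) ?_
    filter_upwards [eventually_ge_atTop n] with m hm
    exact (key' m n v hv).trans
      (mul_le_mul_of_nonneg_left (add_le_add (hεa hm) le_rfl) hA0)
  have hφu : UniformContinuous φ := by
    have h : TendstoUniformly ψ φ atTop := by
      rw [Metric.tendstoUniformly_iff]
      intro η hη
      filter_upwards [hε.eventually (gt_mem_nhds hη)] with n hn x
      rw [dist_comm]
      exact (hψφ n x).trans_lt hn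
    refine h.uniformContinuous (Frequently.of_forall fun n => ?_)
    obtain ⟨K, hK⟩ := hψ n
    exact hK.uniformContinuous
  refine ⟨W, hU.continuousOn (Frequently.of_forall hwc), ?_, fun v hv => ?_⟩
  · refine tendsto_nhds_unique (hW 1 (by simp)) ?_
    simp [hw1]
  · refine hasDerivAt_of_tendstoUniformlyOn (l := atTop) (g' := fun v => a v * φ (W v - G v))
      isOpen_Ioo ?_ (.of_forall hw) (fun x hx => hW x (Ioo_subset_Icc_self hx)) hv
    have hU' : TendstoUniformlyOn (fun n v => w n v - G v) (fun v => W v - G v) atTop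
        (Ioo 0 1) := by
      have := hU.mono Ioo_subset_Icc_self
      rw [Metric.tendstoUniformlyOn_iff] at this ⊢
      simpa using this
    have h2 := hφu.comp_tendstoUniformlyOn hU'
    rw [Metric.tendstoUniformlyOn_iff] at h2 ⊢
    intro η hη
    have hη' : 0 < η / (2 * (A + 1)) := by positivity
    filter_upwards [h2 _ hη', hε.eventually (gt_mem_nhds hη')] with n hn1 hn2 x hx
    have h3 := hn1 x hx
    have h4 := hψφ n (w n x - G x)
    have hxI := Ioo_subset_Icc_self hx
    simp only [Function.comp_apply, Real.dist_eq] at h3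
    rw [Real.dist_eq, ← mul_sub, abs_mul]
    have h5 : |φ (W x - G x) - ψ n (w n x - G x)| < 2 * (η / (2 * (A + 1))) := by
      rw [abs_sub_comm] at h4
      have := abs_sub_le (φ (W x - G x)) (φ (w n x - G x)) (ψ n (w n x - G x))
      linarith
    have h6 : |a x| < A + 1 := (hA x hxI).trans_lt (by linarith)
    calc |a x| * |φ (W x - G x) - ψ n (w n x - G x)|
        < (A + 1) * (2 * (η / (2 * (A + 1)))) :=
          mul_lt_mul'' h6 h5 (abs_nonneg _) (abs_nonneg _)
      _ = η := by field_simp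

theorem exists_lipschitz_approx_truncated_rpow {r M : ℝ} (hr : 0 < r) (hM : 0 < M) {ε : ℝ}
    (hε : 0 < ε) :
    ∃ ψ : ℝ → ℝ, (∃ K, LipschitzWith K ψ) ∧ (∃ C, ∀ x, |ψ x| ≤ C) ∧
      ∀ x, |ψ x - (max 0 (min x M)) ^ r| ≤ ε ^ r := by
  set m : ℝ → ℝ := fun x => max ε (min x M) with hm
  have hmε : ∀ x, ε ≤ m x := fun x => le_max_left _ _
  have hmM : ∀ x, m x ≤ ε + M := fun x =>
    max_le (by linarith) ((min_le_right _ _).trans (by linarith))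
  have hmL : LipschitzWith 1 m := (LipschitzWith.id.min_const M).const_max ε
  refine ⟨fun x => m x ^ r, ?_, ⟨(ε + M) ^ r, fun x => ?_⟩, fun x => ?_⟩
  · have hdiff : ContDiffOn ℝ 1 (fun x : ℝ => x ^ r) (Icc ε (ε + M)) := fun x hx =>
      (Real.contDiffAt_rpow_const_of_ne (by linarith [hx.1])).contDiffWithinAt
    obtain ⟨K, hK⟩ := hdiff.exists_lipschitzOnWith one_ne_zero (convex_Icc _ _) isCompact_Icc
    refine ⟨K * 1, ?_⟩
    rw [← lipschitzOnWith_univ]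
    exact hK.comp hmL.lipschitzOnWith fun x _ => ⟨hmε x, hmM x⟩
  · rw [abs_of_nonneg (Real.rpow_nonneg (hε.le.trans (hmε x)) r)]
    exact Real.rpow_le_rpow (hε.le.trans (hmε x)) (hmM x) hr.le
  · have h0 : 0 ≤ (max 0 (min x M)) ^ r := Real.rpow_nonneg (le_max_left _ _) r
    rcases le_total ε (min x M) with h | h
    · simp only [hm, max_eq_right h, max_eq_right (hε.le.trans h), sub_self, abs_zero]
      positivity
    · have h1 : (max 0 (min x M)) ^ r ≤ ε ^ r :=
        Real.rpow_le_rpow (le_max_left _ _) (max_le hε.le h) hr.le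
      simp only [hm, max_eq_left h]
      rw [abs_le]
      constructor <;> linarith [Real.rpow_pos_of_pos hε r]

/-- A solution of the terminal value problem
`y' = q ((c + h) y₊ ^ r - f)`, `y 1 = 0`. -/
structure IsBackwardSol (r q c : ℝ) (h f y : ℝ → ℝ) : Prop where
  cont : ContinuousOn y (Icc 0 1)
  eqn : ∀ v ∈ Ioo (0 : ℝ) 1, HasDerivAt y (q * ((c + h v) * (max (y v) 0) ^ r - f v)) v
  y1 : y 1 = 0

/-- `G` is a primitive of `q f` on `[0,1]`, vanishing on `[0,θ]`. -/
structure IsSourcePrimitive (q θ : ℝ) (f G : ℝ → ℝ) : Prop where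
  cont : ContinuousOn G (Icc 0 1)
  eqn : ∀ v ∈ Ioo (0 : ℝ) 1, HasDerivAt G (q * f v) v
  zero : ∀ v ∈ Icc (0 : ℝ) θ, G v = 0
  nonneg : ∀ v ∈ Icc (0 : ℝ) 1, 0 ≤ G v

theorem exists_isBackwardSol {r q c θ : ℝ} {h f G : ℝ → ℝ} (hr : 0 < r) (hq : 0 < q)
    (hh : ContinuousOn h (Icc 0 1)) (hch : ∀ v ∈ Icc (0 : ℝ) 1, 0 ≤ c + h v)
    (hG : IsSourcePrimitive q θ f G) : ∃ y, IsBackwardSol r q c h f y := by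
  have hG1 := hG.nonneg 1 (by simp)
  have hM : 0 < G 1 + 1 := by linarith
  choose ψ hψ hψC hψφ using fun n : ℕ =>
    exists_lipschitz_approx_truncated_rpow hr hM (ε := 1 / ((n : ℝ) + 1)) (by positivity)
  obtain ⟨w, hwc, hw1, hw⟩ := exists_terminal_value_of_monotone (a := fun v => q * (c + h v))
    (φ := fun x => (max 0 (min x (G 1 + 1))) ^ r) (G 1) (by fun_prop)
    (fun v hv => mul_nonneg hq.le (hch v hv)) hG.cont
    (fun x y hxy => Real.rpow_le_rpow (le_max_left _ _) (by gcongr) hr.le) hψ hψC hψφ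
    (fun n m hnm => by gcongr)
    (by
      have := (tendsto_one_div_add_atTop_nhds_zero_nat (𝕜 := ℝ)).rpow_const (p := r)
        (Or.inr hr.le)
      rwa [Real.zero_rpow hr.ne'] at this)
  have hmono : MonotoneOn w (Icc 0 1) := by
    refine monotoneOn_of_deriv_nonneg (convex_Icc 0 1) hwc ?_ ?_
    · rw [interior_Icc]
      exact fun x hx => (hw x hx).differentiableAt.differentiableWithinAt
    · rw [interior_Icc]
      intro x hx
      rw [(hw x hx).deriv]
      exact mul_nonneg (mul_nonneg hq.le (hch x (Ioo_subset_Icc_self hx)))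
        (Real.rpow_nonneg (le_max_left _ _) _)
  refine ⟨fun v => w v - G v, hwc.sub hG.cont, fun v hv => ?_, by simp [hw1]⟩
  have hvI := Ioo_subset_Icc_self hv
  have h1 : w v - G v ≤ G 1 + 1 := by
    have := hmono hvI (right_mem_Icc.2 zero_le_one) hv.2.le
    linarith [hG.nonneg v hvI]
  refine ((hw v hv).sub (hG.eqn v hv)).congr_deriv ?_
  rw [min_eq_left h1, max_comm]
  ring

namespace IsBackwardSol

variable {r q c d θ : ℝ} {h f y z G K : ℝ → ℝ}

theorem nonneg (hy : IsBackwardSol r q c h f y) (hr : 0 < r) (hq : 0 < q)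
    (hf : ∀ v ∈ Ioo (0 : ℝ) 1, 0 ≤ f v) {v : ℝ} (hv : v ∈ Icc (0 : ℝ) 1) : 0 ≤ y v := by
  have := image_left_nonpos_of_local_deriv_nonneg (e := fun x => -y x) (δ := 1) hv.2 one_pos
    (hy.cont.neg.mono (Icc_subset_Icc_left hv.1)) (by simp [hy.y1]) fun x hx h0 _ => by
      have hx' : x ∈ Ioo (0 : ℝ) 1 := ⟨hv.1.trans_lt hx.1, hx.2⟩
      refine ⟨_, ?_, (hy.eqn x hx').neg⟩
      rw [max_eq_right (by linarith), Real.zero_rpow hr.ne']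
      nlinarith [hf x hx']
  linarith

theorem le_primitive (hy : IsBackwardSol r q c h f y) (hq : 0 < q)
    (hch : ∀ v ∈ Icc (0 : ℝ) 1, 0 ≤ c + h v) (hG : IsSourcePrimitive q θ f G) {v : ℝ}
    (hv : v ∈ Icc (0 : ℝ) 1) : y v ≤ G 1 := by
  have := image_left_nonpos_of_local_deriv_nonneg (e := fun x => y x + G x - G 1) (δ := 1) hv.2
    one_pos (((hy.cont.add hG.cont).sub continuousOn_const).mono (Icc_subset_Icc_left hv.1))
    (by simp [hy.y1]) fun x hx _ _ => by
      have hx' : x ∈ Ioo (0 : ℝ) 1 := ⟨hv.1.trans_lt hx.1, hx.2⟩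
      refine ⟨_, ?_, ((hy.eqn x hx').add (hG.eqn x hx')).sub_const _⟩
      have := mul_nonneg hq.le (mul_nonneg (hch x (Ioo_subset_Icc_self hx'))
        (Real.rpow_nonneg (le_max_right (y x) 0) r))
      linarith
  linarith [hG.nonneg v hv]

theorem anti (hy : IsBackwardSol r q c h f y) (hz : IsBackwardSol r q d h f z) (hr : 0 < r)
    (hq : 0 < q) (hch : ∀ v ∈ Icc (0 : ℝ) 1, 0 ≤ c + h v) (hcd : c ≤ d) {v : ℝ}
    (hv : v ∈ Icc (0 : ℝ) 1) : z v ≤ y v := by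
  have := image_left_nonpos_of_local_deriv_nonneg (e := fun x => z x - y x) (δ := 1) hv.2
    one_pos ((hz.cont.sub hy.cont).mono (Icc_subset_Icc_left hv.1))
    (by simp [hy.y1, hz.y1]) fun x hx h0 _ => by
      have hx' : x ∈ Ioo (0 : ℝ) 1 := ⟨hv.1.trans_lt hx.1, hx.2⟩
      refine ⟨_, ?_, (hz.eqn x hx').sub (hy.eqn x hx')⟩
      have h1 : (max (y x) 0) ^ r ≤ (max (z x) 0) ^ r :=
        Real.rpow_le_rpow (le_max_right _ _) (max_le_max_right 0 (by linarith)) hr.le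
      have h2 := Real.rpow_nonneg (le_max_right (y x) 0) r
      have h3 := hch x (Ioo_subset_Icc_self hx')
      have h4 := mul_le_mul (a := c + h x) (b := d + h x) (by linarith) h1 h2 (by linarith)
      have := mul_nonneg hq.le (sub_nonneg.2 h4)
      linarith
  linarith

theorem le_add (hy : IsBackwardSol r q c h f y) (hz : IsBackwardSol r q d h f z) (hr : 0 < r)
    (hq : 0 < q) (hch : ∀ v ∈ Icc (0 : ℝ) 1, 0 ≤ c + h v) (hcd : c ≤ d)
    (hG : IsSourcePrimitive q θ f G) {v : ℝ}
    (hv : v ∈ Icc (0 : ℝ) 1) : y v ≤ z v + q * (d - c) * G 1 ^ r := by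
  have hG1 := Real.rpow_nonneg (hG.nonneg 1 (by simp)) r
  have hK : 0 ≤ q * (d - c) * G 1 ^ r := mul_nonneg (mul_nonneg hq.le (sub_nonneg.2 hcd)) hG1
  have := image_left_nonpos_of_local_deriv_nonneg
    (e := fun x => y x - z x - q * (d - c) * G 1 ^ r * (1 - x)) (δ := 1) hv.2
    one_pos (((hy.cont.sub hz.cont).sub (by fun_prop)).mono (Icc_subset_Icc_left hv.1))
    (by simp [hy.y1, hz.y1]) fun x hx h0 _ => by
      have hx' : x ∈ Ioo (0 : ℝ) 1 := ⟨hv.1.trans_lt hx.1, hx.2⟩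
      have hxI := Ioo_subset_Icc_self hx'
      refine ⟨_, ?_, ((hy.eqn x hx').sub (hz.eqn x hx')).sub
        (((hasDerivAt_id x).const_sub 1).const_mul (q * (d - c) * G 1 ^ r))⟩
      have h5 := mul_nonneg hK (sub_nonneg.2 hxI.2)
      have h1 : (max (z x) 0) ^ r ≤ (max (y x) 0) ^ r :=
        Real.rpow_le_rpow (le_max_right _ _) (max_le_max_right 0 (by linarith)) hr.le
      have h3 := hch x hxI
      have h6 : (max (z x) 0) ^ r ≤ G 1 ^ r :=
        Real.rpow_le_rpow (le_max_right _ _) (max_le (hz.le_primitive hq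
          (fun v hv => by linarith [hch v hv]) hG hxI) (hG.nonneg 1 (by simp))) hr.le
      have h7 := mul_le_mul_of_nonneg_left h6 (mul_nonneg hq.le (sub_nonneg.2 hcd))
      have h8 := mul_le_mul_of_nonneg_left h1 (mul_nonneg hq.le h3)
      linarith
  nlinarith [hv.1]

theorem pos (hy : IsBackwardSol r q c h f y) (hr : 0 < r) (hq : 0 < q)
    (hf : ∀ v ∈ Ioo (0 : ℝ) 1, 0 ≤ f v) (hθ : 0 < θ) (hfpos : ∀ v ∈ Ioo θ 1, 0 < f v) {v : ℝ}
    (hv : v ∈ Ioo θ 1) : 0 < y v := by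
  have hv' : v ∈ Ioo (0 : ℝ) 1 := ⟨hθ.trans hv.1, hv.2⟩
  refine lt_of_le_of_ne (hy.nonneg hr hq hf (Ioo_subset_Icc_self hv')) fun h0 => ?_
  have hmin : IsLocalMin y v := by
    filter_upwards [Ioo_mem_nhds hv'.1 hv'.2] with x hx
    rw [← h0]
    exact hy.nonneg hr hq hf (Ioo_subset_Icc_self hx)
  have := hmin.hasDerivAt_eq_zero (hy.eqn v hv')
  rw [← h0, max_self, Real.zero_rpow hr.ne'] at this
  nlinarith [hfpos v hv]

theorem eq_rpow (hy : IsBackwardSol r q c h f y) (hr : 0 < r) (hq : 1 < q) (hqr : q * r = q - 1)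
    (hch : ∀ v ∈ Icc (0 : ℝ) 1, 0 ≤ c + h v) (hθ0 : 0 < θ) (hθ1 : θ < 1)
    (hf0 : ∀ v ∈ Icc (0 : ℝ) θ, f v = 0)
    (hK : ContinuousOn K (Icc 0 1)) (hK0 : ∀ v ∈ Icc (0 : ℝ) 1, 0 ≤ K v)
    (hKd : ∀ v ∈ Ioo (0 : ℝ) 1, HasDerivAt K (c + h v) v) (hyK : y θ = K θ ^ q) {v : ℝ}
    (hv : v ∈ Icc (0 : ℝ) θ) : y v = K v ^ q := by
  have hq0 : 0 < q := by linarith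
  have hsub : Icc v θ ⊆ Icc 0 1 := Icc_subset_Icc hv.1 hθ1.le
  have hcK : ContinuousOn (fun x => K x ^ q) (Icc v θ) :=
    (hK.mono hsub).rpow_const fun _ _ => Or.inr hq0.le
  have hcy := hy.cont.mono hsub
  have hder : ∀ x ∈ Ioo v θ, HasDerivAt (fun x => K x ^ q)
      (q * ((c + h x) * (max (K x ^ q) 0) ^ r)) x ∧
      HasDerivAt y (q * ((c + h x) * (max (y x) 0) ^ r)) x ∧ 0 ≤ c + h x := by
    intro x hx
    have hx' : x ∈ Ioo (0 : ℝ) 1 := ⟨hv.1.trans_lt hx.1, hx.2.trans hθ1⟩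
    have hxI := Ioo_subset_Icc_self hx'
    refine ⟨?_, ?_, hch x hxI⟩
    · refine ((hKd x hx').rpow_const (p := q) (Or.inr hq.le)).congr_deriv ?_
      rw [max_eq_left (Real.rpow_nonneg (hK0 x hxI) q), ← Real.rpow_mul (hK0 x hxI), hqr]
      ring
    · have := hy.eqn x hx'
      rwa [hf0 x ⟨hxI.1, hx.2.le⟩, sub_zero] at this
  have mono : ∀ {s t b : ℝ}, 0 ≤ b → t < s → 0 ≤
      q * (b * (max s 0) ^ r) - q * (b * (max t 0) ^ r) := by
    intro s t b hb hst
    have h1 : (max t 0) ^ r ≤ (max s 0) ^ r :=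
      Real.rpow_le_rpow (le_max_right _ _) (max_le_max_right 0 hst.le) hr.le
    have := mul_le_mul_of_nonneg_left h1 (mul_nonneg hq0.le hb)
    linarith
  apply le_antisymm
  · have := image_left_nonpos_of_local_deriv_nonneg (e := fun x => y x - K x ^ q) (δ := 1) hv.2
      one_pos (hcy.sub hcK) (by simp [hyK]) fun x hx h0 _ => by
        obtain ⟨h1, h2, h3⟩ := hder x hx
        exact ⟨_, mono h3 (sub_pos.1 h0), h2.sub h1⟩
    linarith
  · have := image_left_nonpos_of_local_deriv_nonneg (e := fun x => K x ^ q - y x) (δ := 1) hv.2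
      one_pos (hcK.sub hcy) (by simp [hyK]) fun x hx h0 _ => by
        obtain ⟨h1, h2, h3⟩ := hder x hx
        exact ⟨_, mono h3 (sub_pos.1 h0), h1.sub h2⟩
    linarith

/-- If `y` lies below the explicit solution at `θ`, then it stays below it up to `1`, and
integrating the equation bounds the source. -/
theorem primitive_le_rpow (hy : IsBackwardSol r q c h f y) (hr : 0 < r) (hq : 1 < q)
    (hqr : q * r = q - 1) (hf : ∀ v ∈ Ioo (0 : ℝ) 1, 0 ≤ f v)
    (hch : ∀ v ∈ Icc (0 : ℝ) 1, 0 ≤ c + h v) (hθ0 : 0 < θ) (hθ1 : θ < 1)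
    (hfpos : ∀ v ∈ Ioo θ 1, 0 < f v) (hG : IsSourcePrimitive q θ f G)
    (hK : ContinuousOn K (Icc 0 1)) (hK0 : ∀ v ∈ Icc (0 : ℝ) 1, 0 ≤ K v)
    (hKd : ∀ v ∈ Ioo (0 : ℝ) 1, HasDerivAt K (c + h v) v) (hyK : y θ ≤ K θ ^ q) :
    G 1 ≤ K 1 ^ q := by
  have hq0 : 0 < q := by linarith
  have hqi : 0 < 1 / q := by positivity
  have hsub : Icc θ 1 ⊆ Icc (0 : ℝ) 1 := Icc_subset_Icc hθ0.le le_rfl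
  have hle : ∀ v ∈ Ioo θ 1, y v ^ (1 / q) ≤ K v := by
    intro v hv
    have hvI : Icc θ v ⊆ Icc 0 1 := Icc_subset_Icc hθ0.le hv.2.le
    have := image_right_nonpos_of_local_deriv_nonpos (e := fun x => y x ^ (1 / q) - K x) (δ := 1)
      hv.1.le one_pos (((hy.cont.mono hvI).rpow_const fun _ _ => Or.inr hqi.le).sub
        (hK.mono hvI)) ?_ fun x hx _ _ => by
        have hx1 : x ∈ Ioo θ 1 := ⟨hx.1, hx.2.trans hv.2⟩
        have hx' : x ∈ Ioo (0 : ℝ) 1 := ⟨hθ0.trans hx1.1, hx1.2⟩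
        have hyx := hy.pos hr hq0 hf hθ0 hfpos hx1
        refine ⟨_, ?_, ((hy.eqn x hx').rpow_const (Or.inl hyx.ne')).sub (hKd x hx')⟩
        rw [max_eq_left hyx.le]
        have hr' : r = 1 - 1 / q := by
          field_simp
          linarith
        have h1 : y x ^ r * y x ^ (1 / q - 1) = 1 := by
          rw [← Real.rpow_add hyx, hr', show 1 - 1 / q + (1 / q - 1) = 0 by ring, Real.rpow_zero]
        have h2 : q * (1 / q) = 1 := mul_one_div_cancel hq0.ne'
        have h3 := mul_nonneg (hf x hx') (Real.rpow_pos_of_pos hyx (1 / q - 1)).le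
        have h4 : q * ((c + h x) * y x ^ r - f x) * (1 / q) * y x ^ (1 / q - 1) =
            (q * (1 / q)) * ((c + h x) * (y x ^ r * y x ^ (1 / q - 1)) -
              f x * y x ^ (1 / q - 1)) := by ring
        rw [h4, h1, h2]
        linarith
    · linarith
    · have hθI : θ ∈ Icc (0 : ℝ) 1 := ⟨hθ0.le, hθ1.le⟩
      have := Real.rpow_le_rpow (hy.nonneg hr hq0 hf hθI) hyK hqi.le
      rw [← Real.rpow_mul (hK0 θ hθI), mul_one_div_cancel hq0.ne', Real.rpow_one] at this
      linarith
  have := image_right_nonpos_of_local_deriv_nonpos (e := fun x => y x + G x - K x ^ q) (δ := 1)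
      hθ1.le one_pos (((hy.cont.add hG.cont).mono hsub).sub
        ((hK.mono hsub).rpow_const fun _ _ => Or.inr hq0.le)) ?_ fun x hx _ _ => by
        have hx' : x ∈ Ioo (0 : ℝ) 1 := ⟨hθ0.trans hx.1, hx.2⟩
        have hxI := Ioo_subset_Icc_self hx'
        have hyx := hy.pos hr hq0 hf hθ0 hfpos hx
        refine ⟨_, ?_, ((hy.eqn x hx').add (hG.eqn x hx')).sub
          ((hKd x hx').rpow_const (p := q) (Or.inr hq.le))⟩
        rw [max_eq_left hyx.le]
        have h1 : y x ^ r ≤ K x ^ (q - 1) := by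
          have := Real.rpow_le_rpow (Real.rpow_nonneg hyx.le _) (hle x hx)
            (mul_nonneg hq0.le hr.le)
          rwa [← Real.rpow_mul hyx.le, ← mul_assoc, one_div_mul_cancel hq0.ne', one_mul, hqr]
            at this
        have := mul_le_mul_of_nonneg_left h1 (mul_nonneg hq0.le (hch x hxI))
        linarith
  · simp only [hy.y1] at this
    linarith
  · simp only [hG.zero θ ⟨hθ0.le, le_rfl⟩]
    linarith

end IsBackwardSol

theorem exists_speed {r q θ : ℝ} {h f G H : ℝ → ℝ} (hr : 0 < r) (hq : 1 < q)
    (hqr : q * r = q - 1) (hθ0 : 0 < θ) (hθ1 : θ < 1) (hh : ContinuousOn h (Icc 0 1))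
    (hh0 : ∀ v ∈ Icc (0 : ℝ) 1, 0 ≤ h v) (hf : ∀ v ∈ Ioo (0 : ℝ) 1, 0 ≤ f v)
    (hfpos : ∀ v ∈ Ioo θ 1, 0 < f v) (hG : IsSourcePrimitive q θ f G)
    (hH : ContinuousOn H (Icc 0 1)) (hHd : ∀ v ∈ Ioo (0 : ℝ) 1, HasDerivAt H (h v) v)
    (hH0 : ∀ v ∈ Icc (0 : ℝ) 1, 0 ≤ H v) (hHG : H 1 ^ q < G 1) :
    ∃ c, 0 < c ∧ ∃ y, IsBackwardSol r q c h f y ∧ y θ = (c * θ + H θ) ^ q := by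
  have hq0 : 0 < q := by linarith
  have hθI : θ ∈ Icc (0 : ℝ) 1 := ⟨hθ0.le, hθ1.le⟩
  have hG1 : 0 ≤ G 1 := hG.nonneg 1 (by simp)
  have hch : ∀ c, 0 ≤ c → ∀ v ∈ Icc (0 : ℝ) 1, 0 ≤ c + h v := fun c hc v hv =>
    add_nonneg hc (hh0 v hv)
  have hex : ∀ c, ∃ y, 0 ≤ c → IsBackwardSol r q c h f y := fun c => by
    by_cases hc : 0 ≤ c
    · exact (exists_isBackwardSol hr hq0 hh (hch c hc) hG).imp fun y hy _ => hy
    · exact ⟨0, fun h => absurd h hc⟩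
  choose Y hY using hex
  have hYc : ContinuousOn (fun c => Y c θ) (Ici 0) := by
    refine (LipschitzOnWith.of_le_add_mul (q * G 1 ^ r).toNNReal
      fun c hc d hd => ?_).continuousOn
    rw [Real.coe_toNNReal _ (mul_nonneg hq0.le (Real.rpow_nonneg hG1 r)), Real.dist_eq]
    rcases le_total c d with hcd | hcd
    · have := (hY c hc).le_add (hY d hd) hr hq0 (hch c hc) hcd hG hθI
      rw [abs_sub_comm, abs_of_nonneg (sub_nonneg.2 hcd)]
      linarith
    · have := (hY d hd).anti (hY c hc) hr hq0 (hch d hd) hcd hθI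
      have := mul_nonneg (mul_nonneg hq0.le (Real.rpow_nonneg hG1 r)) (abs_nonneg (c - d))
      linarith
  set B := (G 1 + 1) / θ with hB
  have hB0 : 0 ≤ B := by positivity
  have hcont : ContinuousOn (fun c => Y c θ - (c * θ + H θ) ^ q) (Icc 0 B) :=
    (hYc.mono Icc_subset_Ici_self).sub
      (ContinuousOn.rpow_const (by fun_prop) fun _ _ => Or.inr hq0.le)
  have h0 : 0 < Y 0 θ - (0 * θ + H θ) ^ q := by
    by_contra! hle
    rw [zero_mul, zero_add] at hle
    have := (hY 0 le_rfl).primitive_le_rpow hr hq hqr hf (hch 0 le_rfl) hθ0 hθ1 hfpos hG hH hH0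
      (by simpa using hHd) (by linarith)
    linarith
  have hB1 : Y B θ - (B * θ + H θ) ^ q < 0 := by
    have h1 := (hY B hB0).le_primitive hq0 (hch B hB0) hG hθI
    have h2 : B * θ = G 1 + 1 := div_mul_cancel₀ _ hθ0.ne'
    have h3 : B * θ + H θ ≤ (B * θ + H θ) ^ q :=
      Real.self_le_rpow_of_one_le (by linarith [hH0 θ hθI]) hq.le
    linarith [hH0 θ hθI]
  obtain ⟨c, hc, hc0⟩ := intermediate_value_Icc' hB0 hcont ⟨hB1.le, h0.le⟩
  refine ⟨c, lt_of_le_of_ne hc.1 ?_, Y c, hY c hc.1, sub_eq_zero.1 hc0⟩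
  rintro rfl
  exact h0.ne' hc0

theorem IsBackwardSol.speed_unique {r q c d θ b : ℝ} {h f y z : ℝ → ℝ} (hr : 0 < r) (hq : 0 < q)
    (hθ0 : 0 < θ) (hθ1 : θ < 1) (hy : IsBackwardSol r q c h f y) (hz : IsBackwardSol r q d h f z)
    (hch : ∀ v ∈ Icc (0 : ℝ) 1, 0 ≤ c + h v) (hdh : ∀ v ∈ Icc (0 : ℝ) 1, 0 ≤ d + h v)
    (hc : 0 ≤ c * θ + b) (hd : 0 ≤ d * θ + b) (hyθ : y θ = (c * θ + b) ^ q)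
    (hzθ : z θ = (d * θ + b) ^ q) : c = d := by
  have hθI : θ ∈ Icc (0 : ℝ) 1 := ⟨hθ0.le, hθ1.le⟩
  rcases lt_trichotomy c d with hcd | hcd | hcd
  · have h1 := hy.anti hz hr hq hch hcd.le hθI
    have h2 := Real.rpow_lt_rpow hc (by nlinarith : c * θ + b < d * θ + b) hq
    linarith
  · exact hcd
  · have h1 := hz.anti hy hr hq hdh hcd.le hθI
    have h2 := Real.rpow_lt_rpow hd (by nlinarith : d * θ + b < c * θ + b) hq
    linarith

theorem pconj_sub_one {p : ℝ} (hp : 1 < p) : pconj p - 1 = 1 / (p - 1) := by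
  have : p - 1 ≠ 0 := by linarith
  rw [pconj]
  field_simp
  ring

theorem one_lt_pconj {p : ℝ} (hp : 1 < p) : 1 < pconj p := by
  have h1 := pconj_sub_one hp
  have h2 : 0 < 1 / (p - 1) := one_div_pos.2 (by linarith)
  linarith

theorem pconj_mul_one_div {p : ℝ} (hp : 1 < p) : pconj p * (1 / p) = pconj p - 1 := by
  have h1 : p - 1 ≠ 0 := by linarith
  have h2 : p ≠ 0 := by linarith
  rw [pconj_sub_one hp, pconj]
  field_simp

theorem kfun_lt_pconj {p : ℝ} (hp : 1 < p) : kfun p < pconj p := by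
  have hq := one_lt_pconj hp
  have hq1 := pconj_sub_one hp
  have hp1 : 0 < p - 1 := by linarith
  set q := pconj p with hqdef
  unfold kfun
  rw [← hqdef]
  split_ifs with h2 h2'
  · have h3 : 1 < q - 1 := by
      rw [hq1, lt_div_iff₀ hp1]
      linarith
    have h4 : (2 : ℝ) ≤ 2 ^ (q - 1) := Real.self_le_rpow_of_one_le one_le_two h3.le
    have h5 : 1 / ((2 : ℝ) ^ (q - 1) - 1) ≤ 1 := by
      rw [div_le_one (by linarith)]
      linarith
    linarith
  · exact hq
  · have hp2 : 2 < p := lt_of_le_of_ne (not_lt.1 h2) (Ne.symm h2')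
    have h3 : q - 1 < 1 := by
      rw [hq1, div_lt_one hp1]
      linarith
    set t := (q - 1) ^ ((1 : ℝ) / (q - 2)) with ht
    have ht0 : 0 < t := Real.rpow_pos_of_pos (by linarith) _
    have htq : (q - 1) ^ (q / (q - 2)) = t ^ q := by
      rw [ht, ← Real.rpow_mul (by linarith), one_div_mul_eq_div]
    rw [htq]
    have htq0 : 0 < t ^ q := Real.rpow_pos_of_pos ht0 q
    have h4 : (1 + t) ^ q ≤ q * (1 + t ^ q) := by
      have h5 : (1 + t) ^ q ≤ 2 ^ (q - 1) * (1 ^ q + t ^ q) := by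
        exact_mod_cast NNReal.rpow_add_le_mul_rpow_add_rpow 1 ⟨t, ht0.le⟩ hq.le
      have h6 : (2 : ℝ) ^ (q - 1) ≤ q := by
        have := rpow_one_add_le_one_add_mul_self (s := 1) (by norm_num)
          (by linarith : 0 ≤ q - 1) h3.le
        norm_num at this
        linarith
      rw [Real.one_rpow] at h5
      exact h5.trans (mul_le_mul_of_nonneg_right h6 (by linarith))
    have h7 : 0 < (1 + t) ^ q := Real.rpow_pos_of_pos (by linarith) q
    have h8 : 1 < q - 1 + (1 + q * t + t ^ q) / (1 + t) ^ q := by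
      have : 2 - q < (1 + q * t + t ^ q) / (1 + t) ^ q := by
        rw [lt_div_iff₀ h7]
        have h9 := mul_le_mul_of_nonneg_left h4 (by linarith : 0 ≤ 2 - q)
        have h10 : 0 ≤ (1 - q) ^ 2 * (1 + t ^ q) := by positivity
        have h11 : 0 < q * t := by positivity
        nlinarith
      linarith
    exact div_lt_self (by linarith) h8

theorem CombSetup.hasDerivAt {p θ : ℝ} {D H h g : ℝ → ℝ} (S : CombSetup p θ D H h g) {v : ℝ}
    (hv : v ∈ Ioo (0 : ℝ) 1) : HasDerivAt H (h v) v :=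
  (S.hHd v (Ioo_subset_Icc_self hv)).hasDerivAt (Icc_mem_nhds hv.1 hv.2)

theorem CombSetup.g_nonneg {p θ : ℝ} {D H h g : ℝ → ℝ} (S : CombSetup p θ D H h g) {v : ℝ}
    (hv : v ∈ Ioo (0 : ℝ) 1) : 0 ≤ g v := by
  rcases le_or_gt v θ with hvθ | hvθ
  · exact (S.hg0 v ⟨hv.1.le, hvθ⟩).ge
  · exact (S.hgpos v ⟨hvθ, hv.2⟩).le

theorem CombSetup.hasDerivAt_linear_add {p θ : ℝ} {D H h g : ℝ → ℝ} (S : CombSetup p θ D H h g)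
    (c : ℝ) {v : ℝ} (hv : v ∈ Ioo (0 : ℝ) 1) : HasDerivAt (fun v => c * v + H v) (c + h v) v :=
  (((hasDerivAt_id v).const_mul c).add (S.hasDerivAt hv)).congr_deriv (by ring)

theorem CombSetup.strictMonoOn {p θ c : ℝ} {D H h g : ℝ → ℝ} (S : CombSetup p θ D H h g)
    (hch : ∀ v ∈ Icc (0 : ℝ) 1, 0 < c + h v) :
    StrictMonoOn (fun v => c * v + H v) (Icc 0 1) := by
  refine strictMonoOn_of_deriv_pos (convex_Icc 0 1)
    ((continuousOn_const.mul continuousOn_id).add S.hH.continuousOn) ?_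
  rw [interior_Icc]
  intro v hv
  rw [(S.hasDerivAt_linear_add c hv).deriv]
  exact hch v (Ioo_subset_Icc_self hv)

/-- The diffusive flux, extended by `0` to the points where `u` is `0` or `1`. -/
noncomputable def fluxExt (p : ℝ) (D u : ℝ → ℝ) : ℝ → ℝ :=
  fun ξ => if u ξ ∈ Ioo (0 : ℝ) 1 then flux p D u ξ else 0

namespace IsTWSol

variable {p c θ : ℝ} {D H h g u y : ℝ → ℝ}

theorem isOpen_support (hu : IsTWSol p c D h g u) : IsOpen {ξ | u ξ ∈ Ioo (0 : ℝ) 1} :=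
  isOpen_Ioo.preimage hu.cont

theorem hasDerivAt (hu : IsTWSol p c D h g u) {ξ : ℝ} (hξ : u ξ ∈ Ioo (0 : ℝ) 1) :
    HasDerivAt u (deriv u ξ) ξ :=
  ((hu.smooth.differentiableOn one_ne_zero).differentiableAt
    (hu.isOpen_support.mem_nhds hξ)).hasDerivAt

theorem fluxExt_eq {p : ℝ} {D u : ℝ → ℝ} {ξ : ℝ} (hξ : u ξ ∈ Ioo (0 : ℝ) 1) :
    fluxExt p D u ξ = flux p D u ξ := if_pos hξ

theorem fluxExt_eq_zero {p : ℝ} {D u : ℝ → ℝ} {ξ : ℝ} (hξ : u ξ ∉ Ioo (0 : ℝ) 1) :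
    fluxExt p D u ξ = 0 := if_neg hξ

theorem continuous_fluxExt (hu : IsTWSol p c D h g u) : Continuous (fluxExt p D u) :=
  hu.flux_cont

theorem hasDerivAt_fluxExt (hu : IsTWSol p c D h g u) {ξ : ℝ} (hξ : u ξ ∈ Ioo (0 : ℝ) 1) :
    HasDerivAt (fluxExt p D u) (-(c + h (u ξ)) * deriv u ξ - g (u ξ)) ξ := by
  refine (hu.eqn ξ hξ).congr_of_eventuallyEq ?_
  filter_upwards [hu.isOpen_support.mem_nhds hξ] with x hx using fluxExt_eq hx

theorem tendsto_fluxExt_atTop (hu : IsTWSol p c D h g u) :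
    Tendsto (fluxExt p D u) atTop (nhds 0) := by
  rw [Metric.tendsto_nhds]
  intro ε hε
  obtain ⟨δ, hδ, hδu⟩ := hu.flux_to0 ε hε
  filter_upwards [hu.lim_top.eventually (gt_mem_nhds hδ)] with ξ hξ
  by_cases hx : u ξ ∈ Ioo (0 : ℝ) 1
  · rw [fluxExt_eq hx, Real.dist_eq, sub_zero]
    exact hδu ξ hx hξ
  · rwa [fluxExt_eq_zero hx, dist_self]

theorem tendsto_fluxExt_atBot (hu : IsTWSol p c D h g u) :
    Tendsto (fluxExt p D u) atBot (nhds 0) := by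
  rw [Metric.tendsto_nhds]
  intro ε hε
  obtain ⟨δ, hδ, hδu⟩ := hu.flux_to1 ε hε
  filter_upwards [hu.lim_bot.eventually (lt_mem_nhds (sub_lt_self 1 hδ))] with ξ hξ
  by_cases hx : u ξ ∈ Ioo (0 : ℝ) 1
  · rw [fluxExt_eq hx, Real.dist_eq, sub_zero]
    exact hδu ξ hx hξ
  · rwa [fluxExt_eq_zero hx, dist_self]

theorem deriv_pos_of_fluxExt_pos (S : CombSetup p θ D H h g) {ξ : ℝ}
    (hF : 0 < fluxExt p D u ξ) : u ξ ∈ Ioo (0 : ℝ) 1 ∧ 0 < deriv u ξ := by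
  have hξ : u ξ ∈ Ioo (0 : ℝ) 1 := by
    by_contra h
    rw [fluxExt_eq_zero h] at hF
    exact hF.false
  refine ⟨hξ, ?_⟩
  rw [fluxExt_eq hξ, flux] at hF
  by_contra! hd
  have h1 : |deriv u ξ| ^ (p - 2) * deriv u ξ ≤ 0 :=
    mul_nonpos_of_nonneg_of_nonpos (Real.rpow_nonneg (abs_nonneg _) _) hd
  have h2 := mul_nonneg (S.hDpos _ hξ).le (neg_nonneg.2 h1)
  linarith

theorem deriv_nonpos_of_flux_nonpos (S : CombSetup p θ D H h g) {ξ : ℝ}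
    (hξ : u ξ ∈ Ioo (0 : ℝ) 1) (hF : flux p D u ξ ≤ 0) : deriv u ξ ≤ 0 := by
  by_contra! hd
  rw [flux] at hF
  have h1 : 0 < |deriv u ξ| := abs_pos.2 hd.ne'
  have h2 := mul_pos (S.hDpos _ hξ) (mul_pos (Real.rpow_pos_of_pos h1 (p - 2)) hd)
  linarith

theorem neg_flux_rpow (S : CombSetup p θ D H h g) {ξ : ℝ} (hξ : u ξ ∈ Ioo (0 : ℝ) 1)
    (hd : deriv u ξ ≤ 0) :
    (-flux p D u ξ) ^ (pconj p - 1) = D (u ξ) ^ (pconj p - 1) * (-deriv u ξ) := by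
  have hp1 : 0 < p - 1 := by linarith [S.hp]
  have hq1 := pconj_sub_one S.hp
  have hq0 : pconj p - 1 ≠ 0 := by
    rw [hq1]
    positivity
  rcases hd.eq_or_lt with hd | hd
  · simp [flux, hd, Real.zero_rpow hq0]
  · have hd' : 0 < -deriv u ξ := neg_pos.2 hd
    have h1 : -flux p D u ξ = D (u ξ) * (-deriv u ξ) ^ (p - 1) := by
      have h2 : (-deriv u ξ) ^ (p - 1) = (-deriv u ξ) ^ (p - 2) * (-deriv u ξ) := by
        rw [show p - 1 = (p - 2) + 1 by ring, Real.rpow_add hd', Real.rpow_one]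
      rw [flux, abs_of_neg hd, h2]
      ring
    rw [h1, Real.mul_rpow (S.hDpos _ hξ).le (Real.rpow_nonneg hd'.le _), ← Real.rpow_mul hd'.le,
      hq1, mul_one_div_cancel hp1.ne', Real.rpow_one]

theorem continuous_energy (hu : IsTWSol p c D h g u) (S : CombSetup p θ D H h g) :
    Continuous fun ξ => fluxExt p D u ξ + (c * u ξ + H (u ξ)) :=
  hu.continuous_fluxExt.add ((continuous_const.mul hu.cont).add
    (S.hH.continuousOn.comp_continuous hu.cont hu.mem))

theorem hasDerivAt_energy (hu : IsTWSol p c D h g u) (S : CombSetup p θ D H h g) {ξ : ℝ}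
    (hξ : u ξ ∈ Ioo (0 : ℝ) 1) :
    HasDerivAt (fun ξ => fluxExt p D u ξ + (c * u ξ + H (u ξ))) (-g (u ξ)) ξ := by
  refine ((hu.hasDerivAt_fluxExt hξ).add (((hu.hasDerivAt hξ).const_mul c).add
    ((S.hasDerivAt hξ).comp ξ (hu.hasDerivAt hξ)))).congr_deriv ?_
  ring

theorem fluxExt_nonpos (hu : IsTWSol p c D h g u) (S : CombSetup p θ D H h g)
    (hch : ∀ v ∈ Icc (0 : ℝ) 1, 0 < c + h v) (ξ : ℝ) : fluxExt p D u ξ ≤ 0 := by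
  by_contra! hF
  have hmono : ∀ α, (∀ x ∈ Ioo α ξ, 0 < fluxExt p D u x) → α ≤ ξ → u α ≤ u ξ := by
    intro α hα hαξ
    have := image_left_nonpos_of_local_deriv_nonneg (e := fun x => u x - u ξ) (δ := 1) hαξ one_pos
      (hu.cont.sub continuous_const).continuousOn (by simp) fun x hx _ _ =>
        have h1 := deriv_pos_of_fluxExt_pos S (hα x hx)
        ⟨_, h1.2.le, (hu.hasDerivAt h1.1).sub_const _⟩
    linarith
  have hξ1 := (deriv_pos_of_fluxExt_pos S hF).1.2
  obtain ⟨a, haξ, ha⟩ : ∃ a < ξ, u ξ < u a :=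
    ((eventually_lt_atBot ξ).and (hu.lim_bot.eventually (lt_mem_nhds hξ1))).exists
  have hne : ((Icc a ξ) ∩ {x | fluxExt p D u x ≤ 0}).Nonempty := by
    by_contra hempty
    rw [not_nonempty_iff_eq_empty] at hempty
    refine absurd (hmono a (fun x hx => ?_) haξ.le) (not_le.2 ha)
    by_contra! h
    exact (hempty ▸ (⟨Ioo_subset_Icc_self hx, h⟩ :
      x ∈ (Icc a ξ) ∩ {x | fluxExt p D u x ≤ 0}) : x ∈ (∅ : Set ℝ))
  obtain ⟨α, ⟨hα, hFα⟩, hmax⟩ := (isCompact_Icc.inter_right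
    (isClosed_le hu.continuous_fluxExt continuous_const)).exists_isGreatest hne
  have hpos : ∀ x ∈ Ioo α ξ, 0 < fluxExt p D u x := by
    intro x hx
    by_contra! h
    exact absurd (hmax ⟨⟨hα.1.trans hx.1.le, hx.2.le⟩, h⟩) (not_le.2 hx.1)
  have h1 := hmono α hpos hα.2
  have h2 := (S.strictMonoOn hch).monotoneOn (hu.mem α) (hu.mem ξ) h1
  have hE := (hu.continuous_energy S)
  have h3 := image_right_nonpos_of_local_deriv_nonpos
    (e := fun x => fluxExt p D u x + (c * u x + H (u x)) -
      (fluxExt p D u α + (c * u α + H (u α)))) (δ := 1) hα.2 one_pos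
    (hE.sub continuous_const).continuousOn (by simp) fun x hx _ _ =>
      have h1 := deriv_pos_of_fluxExt_pos S (hpos x hx)
      ⟨_, neg_nonpos.2 (S.g_nonneg h1.1), (hu.hasDerivAt_energy S h1.1).sub_const _⟩
  simp only [mem_ofPred_eq] at hFα
  linarith

theorem deriv_nonpos (hu : IsTWSol p c D h g u) (S : CombSetup p θ D H h g)
    (hch : ∀ v ∈ Icc (0 : ℝ) 1, 0 < c + h v) {ξ : ℝ} (hξ : u ξ ∈ Ioo (0 : ℝ) 1) :
    deriv u ξ ≤ 0 :=
  deriv_nonpos_of_flux_nonpos S hξ (fluxExt_eq (p := p) (D := D) hξ ▸ hu.fluxExt_nonpos S hch ξ)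

theorem exists_first_hit (hu : IsTWSol p c D h g u) (hθ0 : 0 < θ) (hθ1 : θ < 1) :
    ∃ ξ, u ξ = θ ∧ ∀ x < ξ, θ < u x := by
  obtain ⟨a, ha⟩ := (hu.lim_bot.eventually (lt_mem_nhds hθ1)).exists_forall_of_atBot
  obtain ⟨b, hb⟩ := (hu.lim_top.eventually (gt_mem_nhds hθ0)).exists
  have hab : a ≤ b := by
    by_contra! h
    exact lt_asymm hb (ha b h.le)
  obtain ⟨ξ, ⟨hξ, hξθ⟩, hmin⟩ := (isCompact_Icc.inter_right
    (isClosed_le hu.cont continuous_const)).exists_isLeast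
      (⟨b, right_mem_Icc.2 hab, hb.le⟩ : (Icc a b ∩ {x | u x ≤ θ}).Nonempty)
  simp only [mem_ofPred_eq] at hξθ
  have hlt : ∀ x < ξ, θ < u x := by
    intro x hx
    rcases le_total x a with hxa | hxa
    · exact ha x hxa
    · by_contra! h
      exact absurd (hmin ⟨⟨hxa, hx.le.trans hξ.2⟩, h⟩) (not_le.2 hx)
  refine ⟨ξ, le_antisymm hξθ ?_, hlt⟩
  refine ge_of_tendsto (hu.cont.continuousAt.tendsto.mono_left nhdsWithin_le_nhds :
    Tendsto u (nhdsWithin ξ (Iio ξ)) (nhds (u ξ))) ?_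
  filter_upwards [self_mem_nhdsWithin] with x hx using (hlt x hx).le

theorem le_of_le (hu : IsTWSol p c D h g u) (S : CombSetup p θ D H h g)
    (hch : ∀ v ∈ Icc (0 : ℝ) 1, 0 < c + h v) {m ξ x : ℝ} (hm0 : 0 ≤ m) (hm1 : m < 1)
    (hξ : u ξ ≤ m) (hx : ξ ≤ x) : u x ≤ m := by
  have := image_right_nonpos_of_local_deriv_nonpos (e := fun x => u x - m) (δ := 1 - m) hx
    (sub_pos.2 hm1) (hu.cont.sub continuous_const).continuousOn (sub_nonpos.2 hξ)
    fun x _ h0 h1 =>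
      have hx' : u x ∈ Ioo (0 : ℝ) 1 := ⟨by linarith, by linarith⟩
      ⟨_, hu.deriv_nonpos S hch hx', (hu.hasDerivAt hx').sub_const _⟩
  linarith

/-- Below `θ` the energy is conserved, hence it vanishes at the first hitting point of `θ`. -/
theorem fluxExt_eq_of_hit (hu : IsTWSol p c D h g u) (S : CombSetup p θ D H h g)
    (hch : ∀ v ∈ Icc (0 : ℝ) 1, 0 < c + h v) {ξ : ℝ} (hξ : u ξ = θ) :
    fluxExt p D u ξ = -(c * θ + H θ) := by
  have hE := hu.continuous_energy S
  have hlim : Tendsto (fun x => fluxExt p D u x + (c * u x + H (u x))) atTop (nhds 0) := by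
    have h1 : Tendsto (fun x => H (u x)) atTop (nhds 0) := by
      have h2 := (S.hH.continuousOn 0 (by simp)).tendsto
      rw [S.hH0] at h2
      exact h2.comp (tendsto_nhdsWithin_iff.2 ⟨hu.lim_top, .of_forall hu.mem⟩)
    simpa using hu.tendsto_fluxExt_atTop.add ((hu.lim_top.const_mul c).add h1)
  have hd : ∀ x, ξ < x → fluxExt p D u x + (c * u x + H (u x)) ≠ 0 →
      HasDerivAt (fun x => fluxExt p D u x + (c * u x + H (u x))) 0 x := by
    intro x hx h0
    have hxθ := hu.le_of_le S hch S.hθ0.le S.hθ1 hξ.le hx.le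
    have hx0 : u x ≠ 0 := by
      intro hx0
      rw [fluxExt_eq_zero (by simp [hx0]), hx0, S.hH0] at h0
      simp at h0
    have hxm : u x ∈ Ioo (0 : ℝ) 1 :=
      ⟨lt_of_le_of_ne (hu.mem x).1 hx0.symm, hxθ.trans_lt S.hθ1⟩
    simpa [S.hg0 (u x) ⟨hxm.1.le, hxθ⟩] using hu.hasDerivAt_energy S hxm
  have hup : fluxExt p D u ξ + (c * u ξ + H (u ξ)) ≤ 0 := by
    by_contra! hpos
    obtain ⟨b, hb, hξb⟩ :=
      ((hlim.eventually (gt_mem_nhds (half_pos hpos))).and (eventually_ge_atTop ξ)).exists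
    have := image_left_nonpos_of_local_deriv_nonneg
      (e := fun x => fluxExt p D u x + (c * u x + H (u x)) -
        (fluxExt p D u ξ + (c * u ξ + H (u ξ))) / 2) (δ := 1) hξb one_pos
      (hE.sub continuous_const).continuousOn (by linarith) fun x hx h0 _ =>
        ⟨0, le_rfl, (hd x hx.1 (by linarith)).sub_const _⟩
    linarith
  have hlo : 0 ≤ fluxExt p D u ξ + (c * u ξ + H (u ξ)) := by
    by_contra! hneg
    obtain ⟨b, hb, hξb⟩ := ((hlim.eventually (lt_mem_nhds
      (by linarith : (fluxExt p D u ξ + (c * u ξ + H (u ξ))) / 2 < 0))).and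
      (eventually_ge_atTop ξ)).exists
    have := image_left_nonpos_of_local_deriv_nonneg
      (e := fun x => (fluxExt p D u ξ + (c * u ξ + H (u ξ))) / 2 -
        (fluxExt p D u x + (c * u x + H (u x)))) (δ := 1) hξb one_pos
      (continuous_const.sub hE).continuousOn (by linarith) fun x hx h0 _ =>
        ⟨-0, by simp, (hd x hx.1 (by linarith)).const_sub _⟩
    linarith
  rw [hξ] at hup hlo
  linarith

/-- Along a traveling wave, `|flux| ^ p'` is the backward solution evaluated at `u`, up to the
first hitting point of `θ`. -/
theorem neg_fluxExt_rpow_eq (hu : IsTWSol p c D h g u) (S : CombSetup p θ D H h g)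
    (hch : ∀ v ∈ Icc (0 : ℝ) 1, 0 < c + h v)
    (hy : IsBackwardSol (1 / p) (pconj p) c h (fun v => D v ^ (pconj p - 1) * g v) y) {ξ : ℝ}
    (hlt : ∀ x < ξ, θ < u x) : (-fluxExt p D u ξ) ^ pconj p = y (u ξ) := by
  have hq := one_lt_pconj S.hp
  have hq0 : 0 < pconj p := by linarith
  have hr : 0 < 1 / p := one_div_pos.2 (by linarith [S.hp])
  have hPc : Continuous fun x => (-fluxExt p D u x) ^ pconj p :=
    hu.continuous_fluxExt.neg.rpow_const fun _ => Or.inr hq0.le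
  have hyc : Continuous fun x => y (u x) := hy.cont.comp_continuous hu.cont hu.mem
  have hlim : Tendsto (fun x => (-fluxExt p D u x) ^ pconj p - y (u x)) atBot (nhds 0) := by
    have h1 : Tendsto (fun x => y (u x)) atBot (nhds 0) := by
      have h2 := (hy.cont 1 (by simp)).tendsto
      rw [hy.y1] at h2
      exact h2.comp (tendsto_nhdsWithin_iff.2 ⟨hu.lim_bot, .of_forall hu.mem⟩)
    have h2 := hu.tendsto_fluxExt_atBot.neg.rpow_const (p := pconj p) (Or.inr hq0.le)
    rw [neg_zero, Real.zero_rpow hq0.ne'] at h2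
    simpa using h2.sub h1
  have hd : ∀ x < ξ, (-fluxExt p D u x) ^ pconj p - y (u x) ≠ 0 → ∃ s, s ≤ 0 ∧
      HasDerivAt (fun x => (-fluxExt p D u x) ^ pconj p - y (u x))
        (s * (((-fluxExt p D u x) ^ pconj p) ^ (1 / p) - (max (y (u x)) 0) ^ (1 / p))) x := by
    intro x hx h0
    have hx1 : u x ≠ 1 := by
      intro hx1
      rw [fluxExt_eq_zero (by simp [hx1]), hx1, hy.y1, neg_zero, Real.zero_rpow hq0.ne'] at h0
      simp at h0
    have hxm : u x ∈ Ioo (0 : ℝ) 1 :=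
      ⟨S.hθ0.trans (hlt x hx), lt_of_le_of_ne (hu.mem x).2 hx1⟩
    have hdx := hu.deriv_nonpos S hch hxm
    have hF0 : 0 ≤ -fluxExt p D u x := neg_nonneg.2 (hu.fluxExt_nonpos S hch x)
    refine ⟨pconj p * (c + h (u x)) * deriv u x, ?_, ?_⟩
    · exact mul_nonpos_of_nonneg_of_nonpos (mul_nonneg hq0.le (hch _ (hu.mem x)).le) hdx
    · refine (((hu.hasDerivAt_fluxExt hxm).neg.rpow_const (Or.inr hq.le)).sub
        ((hy.eqn _ hxm).comp x (hu.hasDerivAt hxm))).congr_deriv ?_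
      rw [← Real.rpow_mul hF0, pconj_mul_one_div S.hp]
      simp only [Pi.neg_apply]
      rw [fluxExt_eq hxm, neg_flux_rpow S hxm hdx]
      ring
  have hmono : ∀ {s t : ℝ}, s ≤ t → (max s 0) ^ (1 / p) ≤ (max t 0) ^ (1 / p) := fun hst =>
    Real.rpow_le_rpow (le_max_right _ _) (max_le_max_right 0 hst) hr.le
  have hP0 : ∀ x, max ((-fluxExt p D u x) ^ pconj p) 0 = (-fluxExt p D u x) ^ pconj p := fun x =>
    max_eq_left (Real.rpow_nonneg (neg_nonneg.2 (hu.fluxExt_nonpos S hch x)) _)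
  apply le_antisymm
  · by_contra! hgt
    have hpos := sub_pos.2 hgt
    obtain ⟨a, ha, haξ⟩ :=
      ((hlim.eventually (gt_mem_nhds (half_pos hpos))).and (eventually_le_atBot ξ)).exists
    have := image_right_nonpos_of_local_deriv_nonpos
      (e := fun x => (-fluxExt p D u x) ^ pconj p - y (u x) -
        ((-fluxExt p D u ξ) ^ pconj p - y (u ξ)) / 2) (δ := 1) haξ one_pos
      ((hPc.sub hyc).sub continuous_const).continuousOn (by linarith) fun x hx h0 _ => by
        obtain ⟨s, hs, hds⟩ := hd x hx.2 (by linarith)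
        refine ⟨_, ?_, hds.sub_const _⟩
        have h1 := hmono (by linarith : y (u x) ≤ (-fluxExt p D u x) ^ pconj p)
        rw [hP0] at h1
        exact mul_nonpos_of_nonpos_of_nonneg hs (sub_nonneg.2 h1)
    linarith
  · by_contra! hgt
    have hneg := sub_neg.2 hgt
    obtain ⟨a, ha, haξ⟩ := ((hlim.eventually (lt_mem_nhds (by linarith :
      ((-fluxExt p D u ξ) ^ pconj p - y (u ξ)) / 2 < 0))).and (eventually_le_atBot ξ)).exists
    have := image_right_nonpos_of_local_deriv_nonpos
      (e := fun x => ((-fluxExt p D u ξ) ^ pconj p - y (u ξ)) / 2 -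
        ((-fluxExt p D u x) ^ pconj p - y (u x))) (δ := 1) haξ one_pos
      (continuous_const.sub (hPc.sub hyc)).continuousOn (by linarith) fun x hx h0 _ => by
        obtain ⟨s, hs, hds⟩ := hd x hx.2 (by linarith)
        refine ⟨_, ?_, hds.const_sub _⟩
        have h1 := hmono (by linarith : (-fluxExt p D u x) ^ pconj p ≤ y (u x))
        rw [hP0] at h1
        have := mul_nonneg_of_nonpos_of_nonpos hs (sub_nonpos.2 h1)
        linarith
    linarith

theorem backwardSol_eq (hu : IsTWSol p c D h g u) (S : CombSetup p θ D H h g)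
    (hch : ∀ v ∈ Icc (0 : ℝ) 1, 0 < c + h v)
    (hy : IsBackwardSol (1 / p) (pconj p) c h (fun v => D v ^ (pconj p - 1) * g v) y) :
    y θ = (c * θ + H θ) ^ pconj p := by
  obtain ⟨ξ, hξ, hlt⟩ := hu.exists_first_hit S.hθ0 S.hθ1
  have := hu.neg_fluxExt_rpow_eq S hch hy hlt
  rw [hu.fluxExt_eq_of_hit S hch hξ, neg_neg, hξ] at this
  exact this.symm

end IsTWSol

/-- A decreasing parametrization of `(0,1)` has a continuous inverse profile on the whole line. -/
theorem exists_profile {T T' : ℝ → ℝ} (hT : ∀ v ∈ Ioo (0 : ℝ) 1, HasDerivAt T (T' v) v)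
    (hT' : ∀ v ∈ Ioo (0 : ℝ) 1, T' v < 0) :
    ∃ u : ℝ → ℝ, Continuous u ∧ (∀ ξ, u ξ ∈ Icc (0 : ℝ) 1) ∧
      (∀ ξ, u ξ ∈ Ioo (0 : ℝ) 1 → HasDerivAt u (T' (u ξ))⁻¹ ξ) ∧
      Tendsto u atBot (nhds 1) ∧ Tendsto u atTop (nhds 0) := by
  have hanti : StrictAntiOn T (Ioo 0 1) := by
    refine strictAntiOn_of_deriv_neg (convex_Ioo 0 1)
      (fun v hv => (hT v hv).continuousAt.continuousWithinAt) ?_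
    rw [interior_Ioo]
    intro v hv
    rw [(hT v hv).deriv]
    exact hT' v hv
  set A : ℝ → Set ℝ := fun ξ => insert 0 {v | v ∈ Ioo (0 : ℝ) 1 ∧ ξ ≤ T v} with hA
  have hAne : ∀ ξ, (A ξ).Nonempty := fun ξ => ⟨0, mem_insert _ _⟩
  have hA1 : ∀ ξ, ∀ v ∈ A ξ, v ≤ 1 := by
    rintro ξ v (rfl | hv)
    · exact zero_le_one
    · exact hv.1.2.le
  have hAb : ∀ ξ, BddAbove (A ξ) := fun ξ => ⟨1, hA1 ξ⟩
  set u : ℝ → ℝ := fun ξ => sSup (A ξ) with hu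
  have hmem : ∀ ξ, u ξ ∈ Icc (0 : ℝ) 1 := fun ξ =>
    ⟨le_csSup (hAb ξ) (mem_insert _ _), csSup_le (hAne ξ) (hA1 ξ)⟩
  have hle : ∀ ξ, ∀ w ∈ Ioo (0 : ℝ) 1, ξ ≤ T w → w ≤ u ξ := fun ξ w hw hξ =>
    le_csSup (hAb ξ) (Or.inr ⟨hw, hξ⟩)
  have hge : ∀ ξ, ∀ w ∈ Ioo (0 : ℝ) 1, T w ≤ ξ → u ξ ≤ w := by
    intro ξ w hw hξ
    refine csSup_le (hAne ξ) ?_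
    rintro v (rfl | hv)
    · exact hw.1.le
    · exact (hanti.le_iff_ge hw hv.1).1 (hξ.trans hv.2)
  have hcont : Continuous u := by
    rw [continuous_iff_continuousAt]
    intro ξ
    refine tendsto_order.2 ⟨fun a ha => ?_, fun a ha => ?_⟩
    · rcases lt_or_ge a 0 with ha0 | ha0
      · exact .of_forall fun x => ha0.trans_le (hmem x).1
      · obtain ⟨w, haw, hwu⟩ := exists_between ha
        have hw : w ∈ Ioo (0 : ℝ) 1 := ⟨ha0.trans_lt haw, hwu.trans_le (hmem ξ).2⟩
        have hξ : ξ < T w := by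
          by_contra! h
          exact absurd (hge ξ w hw h) (not_le.2 hwu)
        filter_upwards [gt_mem_nhds hξ] with x hx using haw.trans_le (hle x w hw hx.le)
    · rcases lt_or_ge 1 a with ha1 | ha1
      · exact .of_forall fun x => (hmem x).2.trans_lt ha1
      · obtain ⟨w, hwu, haw⟩ := exists_between ha
        have hw : w ∈ Ioo (0 : ℝ) 1 := ⟨(hmem ξ).1.trans_lt hwu, haw.trans_le ha1⟩
        have hξ : T w < ξ := by
          by_contra! h
          exact absurd (hle ξ w hw h) (not_le.2 hwu)
        filter_upwards [lt_mem_nhds hξ] with x hx using (hge x w hw hx.le).trans_lt haw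
  have hinv : ∀ ξ, u ξ ∈ Ioo (0 : ℝ) 1 → T (u ξ) = ξ := by
    intro ξ hξ
    refine le_antisymm ?_ ?_
    · refine le_of_tendsto ((hT _ hξ).continuousAt.tendsto.mono_left
        (nhdsWithin_le_nhds (s := Ioi (u ξ)))) ?_
      filter_upwards [Ioo_mem_nhdsGT hξ.2] with w hw
      by_contra! h
      exact absurd (hle ξ w ⟨hξ.1.trans hw.1, hw.2⟩ h.le) (not_le.2 hw.1)
    · refine ge_of_tendsto ((hT _ hξ).continuousAt.tendsto.mono_left
        (nhdsWithin_le_nhds (s := Iio (u ξ)))) ?_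
      filter_upwards [Ioo_mem_nhdsLT hξ.1] with w hw
      by_contra! h
      exact absurd (hge ξ w ⟨hw.1, hw.2.trans hξ.2⟩ h.le) (not_le.2 hw.2)
  refine ⟨u, hcont, hmem, fun ξ hξ => ?_, ?_, ?_⟩
  · refine HasDerivAt.of_local_left_inverse hcont.continuousAt (hT _ hξ) (hT' _ hξ).ne ?_
    filter_upwards [(isOpen_Ioo.preimage hcont).mem_nhds hξ] with x hx using hinv x hx
  · refine tendsto_order.2 ⟨fun a ha => ?_, fun a ha => .of_forall fun x =>
      (hmem x).2.trans_lt ha⟩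
    obtain ⟨w, haw, hw1⟩ := exists_between (max_lt ha zero_lt_one)
    have hw : w ∈ Ioo (0 : ℝ) 1 := ⟨(le_max_right _ _).trans_lt haw, hw1⟩
    filter_upwards [eventually_le_atBot (T w)] with x hx using
      ((le_max_left _ _).trans_lt haw).trans_le (hle x w hw hx)
  · refine tendsto_order.2 ⟨fun a ha => .of_forall fun x => ha.trans_le (hmem x).1,
      fun a ha => ?_⟩
    obtain ⟨w, hw0, haw⟩ := exists_between (lt_min ha zero_lt_one)
    have hw : w ∈ Ioo (0 : ℝ) 1 := ⟨hw0, haw.trans_le (min_le_right _ _)⟩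
    filter_upwards [eventually_ge_atTop (T w)] with x hx using
      (hge x w hw hx).trans_lt (haw.trans_le (min_le_left _ _))

/-- A continuous function on `(0,1)` has a primitive there. -/
theorem exists_hasDerivAt_Ioo {φ : ℝ → ℝ} (hφ : ContinuousOn φ (Ioo 0 1)) :
    ∃ T : ℝ → ℝ, ∀ v ∈ Ioo (0 : ℝ) 1, HasDerivAt T (φ v) v := by
  refine ⟨fun v => ∫ x in (1 / 2 : ℝ)..v, φ x, fun v hv => ?_⟩
  have hsub : uIcc (1 / 2 : ℝ) v ⊆ Ioo 0 1 :=
    OrdConnected.uIcc_subset ordConnected_Ioo (by norm_num) hv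
  exact intervalIntegral.integral_hasDerivAt_right (hφ.mono hsub).intervalIntegrable
    (hφ.stronglyMeasurableAtFilter isOpen_Ioo v hv) (hφ.continuousAt (Ioo_mem_nhds hv.1 hv.2))

/-- A positive solution of the first-order problem produces a traveling wave. -/
theorem IsFOSol.exists_isTWSol {p c θ : ℝ} {D H h g y : ℝ → ℝ} (S : CombSetup p θ D H h g)
    (hy : IsFOSol p c D h g y) : ∃ u, IsTWSol p c D h g u := by
  have hp1 : 0 < p - 1 := by linarith [S.hp]
  have hq := one_lt_pconj S.hp
  have hq1 := pconj_sub_one S.hp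
  have hqp := pconj_mul_one_div S.hp
  set q := pconj p with hqdef
  have hq0 : 0 < q := by linarith
  have hconj : 1 / q - 1 = -(1 / p) := by
    field_simp
    field_simp at hqp
    linarith
  set z : ℝ → ℝ := fun v => y v ^ (1 / q) with hz
  set w : ℝ → ℝ := fun v => (z v / D v) ^ (q - 1) with hw
  have hzc : ContinuousOn z (Icc 0 1) := hy.cont.rpow_const fun _ _ => Or.inr (by positivity)
  have hzpos : ∀ v ∈ Ioo (0 : ℝ) 1, 0 < z v := fun v hv => Real.rpow_pos_of_pos (hy.pos v hv) _
  have hwpos : ∀ v ∈ Ioo (0 : ℝ) 1, 0 < w v := fun v hv =>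
    Real.rpow_pos_of_pos (div_pos (hzpos v hv) (S.hDpos v hv)) _
  have hz0 : ∀ v ∈ Icc (0 : ℝ) 1, v ∉ Ioo (0 : ℝ) 1 → z v = 0 := by
    intro v hv hv'
    have h0 : y v = 0 := by
      rcases hv.1.eq_or_lt with h | h
      · rw [← h, hy.y0]
      · rcases hv.2.eq_or_lt with h1 | h1
        · rw [h1, hy.y1]
        · exact absurd ⟨h, h1⟩ hv'
    simp only [hz, h0]
    exact Real.zero_rpow (by positivity)
  have hwc : ContinuousOn w (Ioo 0 1) :=
    ((hzc.mono Ioo_subset_Icc_self).div S.hD.continuousOn fun v hv =>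
      (S.hDpos v hv).ne').rpow_const fun v hv => Or.inr (by linarith)
  obtain ⟨T, hT⟩ := exists_hasDerivAt_Ioo (hwc.inv₀ fun v hv => (hwpos v hv).ne').neg
  obtain ⟨u, huc, hum, hud, hbot, htop⟩ := exists_profile hT fun v hv =>
    neg_neg_of_pos (inv_pos.2 (hwpos v hv))
  have hud' : ∀ ξ, u ξ ∈ Ioo (0 : ℝ) 1 → HasDerivAt u (-w (u ξ)) ξ := fun ξ hξ =>
    (hud ξ hξ).congr_deriv (by simp [inv_neg])
  have hopen : IsOpen {ξ | u ξ ∈ Ioo (0 : ℝ) 1} := isOpen_Ioo.preimage huc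
  have hflux : ∀ ξ, u ξ ∈ Ioo (0 : ℝ) 1 → flux p D u ξ = -z (u ξ) := by
    intro ξ hξ
    have hwξ := hwpos _ hξ
    have hD := S.hDpos _ hξ
    have h1 : w (u ξ) ^ (p - 2) * w (u ξ) = z (u ξ) / D (u ξ) := by
      rw [← Real.rpow_add_one hwξ.ne', show p - 2 + 1 = p - 1 by ring,
        ← Real.rpow_mul (div_pos (hzpos _ hξ) hD).le, hq1, one_div_mul_cancel hp1.ne', Real.rpow_one]
    rw [flux, (hud' ξ hξ).deriv, abs_neg, abs_of_pos hwξ, mul_neg, h1]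
    field_simp
  have hext : (fun ξ => if u ξ ∈ Ioo (0 : ℝ) 1 then flux p D u ξ else 0) = fun ξ => -z (u ξ) := by
    funext ξ
    split_ifs with hξ
    · exact hflux ξ hξ
    · rw [hz0 _ (hum ξ) hξ, neg_zero]
  have hzd : ∀ v ∈ Ioo (0 : ℝ) 1, HasDerivAt z (c + h v - g v / w v) v := by
    intro v hv
    have hyv := hy.pos v hv
    refine ((hy.eqn v hv).rpow_const (Or.inl hyv.ne')).congr_deriv ?_
    have hD := S.hDpos v hv
    have hyp := Real.rpow_pos_of_pos hyv (1 / p)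
    have hDq := Real.rpow_pos_of_pos hD (q - 1)
    have hwv : w v = y v ^ (1 / p) / D v ^ (q - 1) := by
      simp only [hw, hz]
      rw [Real.div_rpow (Real.rpow_pos_of_pos hyv _).le hD.le, ← Real.rpow_mul hyv.le]
      congr 2
      linarith [mul_sub (1 / q) q 1, one_div_mul_cancel hq0.ne']
    rw [max_eq_left hyv.le, hconj, Real.rpow_neg hyv.le, hwv, ← hqdef]
    field_simp
  have hsmall : ∀ a ∈ Icc (0 : ℝ) 1, a ∉ Ioo (0 : ℝ) 1 → ∀ ε > 0, ∃ δ > 0, ∀ ξ,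
      u ξ ∈ Ioo (0 : ℝ) 1 → |u ξ - a| < δ → |flux p D u ξ| < ε := by
    intro a ha ha' ε hε
    obtain ⟨δ, hδ, hδz⟩ := Metric.continuousWithinAt_iff.1 (hzc a ha) ε hε
    refine ⟨δ, hδ, fun ξ hξ hlt => ?_⟩
    have h1 := hδz (hum ξ) (by rwa [Real.dist_eq])
    rwa [hz0 a ha ha', Real.dist_eq, sub_zero, ← abs_neg, ← hflux ξ hξ] at h1
  refine ⟨u, huc, hum, ?_, fun ξ hξ => ?_, ?_, fun ε hε => ?_, fun ε hε => ?_, hbot, htop⟩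
  · rw [show (1 : WithTop ℕ∞) = 0 + 1 by simp, contDiffOn_succ_iff_deriv_of_isOpen hopen]
    refine ⟨fun ξ hξ => (hud' ξ hξ).differentiableAt.differentiableWithinAt, by simp, ?_⟩
    rw [contDiffOn_zero]
    exact (hwc.comp huc.continuousOn fun ξ hξ => hξ).neg.congr fun ξ hξ => (hud' ξ hξ).deriv
  · refine ((((hzd _ hξ).comp ξ (hud' ξ hξ)).neg).congr_of_eventuallyEq ?_).congr_deriv ?_
    · filter_upwards [hopen.mem_nhds hξ] with x hx using hflux x hx
    · rw [(hud' ξ hξ).deriv]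
      have := (hwpos _ hξ).ne'
      field_simp
  · rw [hext]
    exact (hzc.comp_continuous huc hum).neg
  · obtain ⟨δ, hδ, hlt⟩ := hsmall 0 (by simp) (by simp) ε hε
    exact ⟨δ, hδ, fun ξ hξ hx => hlt ξ hξ (by rwa [sub_zero, abs_of_pos hξ.1])⟩
  · obtain ⟨δ, hδ, hlt⟩ := hsmall 1 (by simp) (by simp) ε hε
    exact ⟨δ, hδ, fun ξ hξ hx => hlt ξ hξ (by
      rw [abs_sub_comm, abs_of_pos (by linarith [hξ.2])]
      linarith)⟩

theorem CombSetup.isSourcePrimitive {p θ : ℝ} {D H h g : ℝ → ℝ} (S : CombSetup p θ D H h g) :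
    IsSourcePrimitive (pconj p) θ (fun v => D v ^ (pconj p - 1) * g v)
      (fun v => pconj p * ∫ x in (0 : ℝ)..v, D x ^ (pconj p - 1) * g x) := by
  have hq := one_lt_pconj S.hp
  have hfint : IntegrableOn (fun v => D v ^ (pconj p - 1) * g v) (Icc 0 1) := by
    rw [integrableOn_Icc_iff_integrableOn_Ioo]
    exact S.hInt
  have hii : ∀ v ∈ Icc (0 : ℝ) 1,
      IntervalIntegrable (fun v => D v ^ (pconj p - 1) * g v) volume 0 v := fun v hv =>
    (intervalIntegrable_iff_integrableOn_Icc_of_le hv.1).2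
      (hfint.mono_set (Icc_subset_Icc_right hv.2))
  have hf : ContinuousOn (fun v => D v ^ (pconj p - 1) * g v) (Ioo 0 1) :=
    (S.hD.continuousOn.rpow_const fun v hv => Or.inl (S.hDpos v hv).ne').mul
      (S.hgc.mono Ioo_subset_Icc_self)
  refine ⟨continuousOn_const.mul ?_, fun v hv => HasDerivAt.const_mul _ ?_, fun v hv => ?_,
    fun v hv => mul_nonneg (by linarith) ?_⟩
  · rw [← uIcc_of_le zero_le_one] at hfint ⊢
    exact intervalIntegral.continuousOn_primitive_interval hfint
  · exact intervalIntegral.integral_hasDerivAt_right (hii v (Ioo_subset_Icc_self hv))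
      (hf.stronglyMeasurableAtFilter isOpen_Ioo v hv) (hf.continuousAt (Ioo_mem_nhds hv.1 hv.2))
  · rw [intervalIntegral.integral_congr (g := fun _ => 0) fun x hx => ?_]
    · simp
    · rw [uIcc_of_le hv.1] at hx
      simp [S.hg0 x ⟨hx.1, hx.2.trans hv.2⟩]
  · rw [intervalIntegral.integral_of_le hv.1, integral_Ioc_eq_integral_Ioo]
    refine setIntegral_nonneg measurableSet_Ioo fun x hx => ?_
    have hx' : x ∈ Ioo (0 : ℝ) 1 := ⟨hx.1, hx.2.trans_le hv.2⟩
    exact mul_nonneg (Real.rpow_nonneg (S.hDpos x hx').le _) (S.g_nonneg hx')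

theorem CombSetup.source_nonneg {p θ : ℝ} {D H h g : ℝ → ℝ} (S : CombSetup p θ D H h g) {v : ℝ}
    (hv : v ∈ Ioo (0 : ℝ) 1) : 0 ≤ D v ^ (pconj p - 1) * g v :=
  mul_nonneg (Real.rpow_nonneg (S.hDpos v hv).le _) (S.g_nonneg hv)

theorem CombSetup.source_pos {p θ : ℝ} {D H h g : ℝ → ℝ} (S : CombSetup p θ D H h g) {v : ℝ}
    (hv : v ∈ Ioo θ 1) : 0 < D v ^ (pconj p - 1) * g v :=
  mul_pos (Real.rpow_pos_of_pos (S.hDpos v ⟨S.hθ0.trans hv.1, hv.2⟩) _) (S.hgpos v hv)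

theorem CombSetup.linear_add_pos {p θ c : ℝ} {D H h g : ℝ → ℝ} (S : CombSetup p θ D H h g)
    (hch : ∀ v ∈ Icc (0 : ℝ) 1, 0 < c + h v) {v : ℝ} (hv : v ∈ Ioc (0 : ℝ) 1) :
    0 < c * v + H v := by
  simpa [S.hH0] using S.strictMonoOn hch (by simp) (Ioc_subset_Icc_self hv) hv.1

theorem IsBackwardSol.isFOSol {p c θ : ℝ} {D H h g y : ℝ → ℝ} (S : CombSetup p θ D H h g)
    (hch : ∀ v ∈ Icc (0 : ℝ) 1, 0 < c + h v)
    (hy : IsBackwardSol (1 / p) (pconj p) c h (fun v => D v ^ (pconj p - 1) * g v) y)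
    (hyθ : y θ = (c * θ + H θ) ^ pconj p) : IsFOSol p c D h g y := by
  have hq := one_lt_pconj S.hp
  have hr : 0 < 1 / p := one_div_pos.2 (by linarith [S.hp])
  have hK0 : ∀ v ∈ Icc (0 : ℝ) 1, 0 ≤ c * v + H v := by
    intro v hv
    rcases hv.1.eq_or_lt with h | h
    · simp [← h, S.hH0]
    · exact (S.linear_add_pos hch ⟨h, hv.2⟩).le
  have heq : ∀ v ∈ Icc 0 θ, y v = (c * v + H v) ^ pconj p := fun v hv =>
    hy.eq_rpow hr hq (pconj_mul_one_div S.hp) (fun v hv => (hch v hv).le) S.hθ0 S.hθ1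
      (fun v hv => by simp [S.hg0 v hv])
      ((continuousOn_const.mul continuousOn_id).add S.hH.continuousOn) hK0
      (fun v hv => S.hasDerivAt_linear_add c hv) hyθ hv
  refine ⟨hy.cont, hy.eqn, ?_, hy.y1, fun v hv => ?_⟩
  · rw [heq 0 ⟨le_rfl, S.hθ0.le⟩, S.hH0]
    simpa using Real.zero_rpow (by linarith : pconj p ≠ 0)
  · rcases le_or_gt v θ with hvθ | hvθ
    · rw [heq v ⟨hv.1.le, hvθ⟩]
      exact Real.rpow_pos_of_pos (S.linear_add_pos hch ⟨hv.1, hv.2.le⟩) _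
    · exact hy.pos hr (by linarith) (fun v hv => S.source_nonneg hv) S.hθ0
        (fun v hv => S.source_pos hv) ⟨hvθ, hv.2⟩

theorem kfun_pos {p : ℝ} (hp : 1 < p) : 0 < kfun p := by
  have hq1 := pconj_sub_one hp
  have h0 : 0 < pconj p - 1 := by
    rw [hq1]
    exact one_div_pos.2 (by linarith)
  have hq0 : 0 < pconj p := by linarith
  unfold kfun
  split_ifs with h2 h2'
  · exact one_div_pos.2 (sub_pos.2 (Real.one_lt_rpow one_lt_two h0))
  · exact one_pos
  · positivity

/-- The smallness condition on `H 1` in the form used to produce a positive speed. -/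
theorem CombSetup.rpow_lt_primitive {p θ : ℝ} {D H h g : ℝ → ℝ} (S : CombSetup p θ D H h g)
    (hH1 : 0 < H 1)
    (hmain : H 1 ≤ (kfun p * ∫ v in Ioo (0 : ℝ) 1, D v ^ (pconj p - 1) * g v) ^ (1 / pconj p)) :
    H 1 ^ pconj p < pconj p * ∫ v in (0 : ℝ)..1, D v ^ (pconj p - 1) * g v := by
  have hq := one_lt_pconj S.hp
  have hk := kfun_lt_pconj S.hp
  have hGpos := S.isSourcePrimitive.nonneg 1 (by simp)
  simp only [intervalIntegral.integral_of_le zero_le_one, integral_Ioc_eq_integral_Ioo]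
    at hGpos ⊢
  set I := ∫ v in Ioo (0 : ℝ) 1, D v ^ (pconj p - 1) * g v
  have hI : 0 ≤ I := nonneg_of_mul_nonneg_right hGpos (by linarith)
  have hIpos : 0 < I := by
    refine lt_of_le_of_ne hI fun h0 => ?_
    rw [← h0, mul_zero, Real.zero_rpow (by positivity)] at hmain
    exact absurd hmain (not_le.2 hH1)
  have h1 := Real.rpow_le_rpow hH1.le hmain (by linarith : 0 ≤ pconj p)
  rw [← Real.rpow_mul (mul_pos (kfun_pos S.hp) hIpos).le, one_div_mul_cancel (by linarith),
    Real.rpow_one] at h1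
  exact h1.trans_lt (mul_lt_mul_of_pos_right hk hIpos)

/-- Theorem: Positive wave speed.
If `h > 0` on `[0,1]` and `H(1) ≤ (k(p) ∫₀¹ D^{p'-1} g)^{1/p'}`, then the unique
admissible speed `c*` satisfies `c* > 0 > -h_m`. -/
theorem stmt3 (p θ : ℝ) (D H h g : ℝ → ℝ) (S : CombSetup p θ D H h g)
    (hhpos : ∀ v ∈ Icc (0 : ℝ) 1, 0 < h v)
    (hmain : H 1 ≤ (kfun p * ∫ v in Ioo (0 : ℝ) 1, D v ^ (pconj p - 1) * g v) ^ (1 / pconj p)) :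
    ∃ cstar : ℝ, -sInf (h '' Icc 0 1) < cstar ∧
      (∃ u : ℝ → ℝ, IsTWSol p cstar D h g u) ∧
      (∀ c : ℝ, -sInf (h '' Icc 0 1) < c → (∃ u : ℝ → ℝ, IsTWSol p c D h g u) → c = cstar) ∧
      0 < cstar ∧ -sInf (h '' Icc 0 1) < 0 := by
  have hq := one_lt_pconj S.hp
  have hq0 : 0 < pconj p := by linarith
  have hr : 0 < 1 / p := one_div_pos.2 (by linarith [S.hp])
  have hG := S.isSourcePrimitive
  have hcomp : IsCompact (h '' Icc 0 1) := isCompact_Icc.image_of_continuousOn S.hh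
  have hmin : -sInf (h '' Icc 0 1) < 0 := by
    obtain ⟨v, hv, hvm⟩ := hcomp.sInf_mem ((nonempty_Icc.2 zero_le_one).image h)
    rw [← hvm]
    exact neg_neg_of_pos (hhpos v hv)
  have hadm : ∀ c, -sInf (h '' Icc 0 1) < c → ∀ v ∈ Icc (0 : ℝ) 1, 0 < c + h v :=
      fun c hc v hv => by
    linarith [csInf_le hcomp.bddBelow (mem_image_of_mem h hv)]
  have hadm0 : ∀ v ∈ Icc (0 : ℝ) 1, 0 < 0 + h v := by simpa using hhpos
  have hHpos : ∀ v ∈ Ioc (0 : ℝ) 1, 0 < H v := fun v hv => by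
    simpa using S.linear_add_pos hadm0 hv
  have hH0 : ∀ v ∈ Icc (0 : ℝ) 1, 0 ≤ H v := fun v hv => by
    rcases hv.1.eq_or_lt with h | h
    · rw [← h, S.hH0]
    · exact (hHpos v ⟨h, hv.2⟩).le
  have hθ : θ ∈ Ioc (0 : ℝ) 1 := ⟨S.hθ0, S.hθ1.le⟩
  obtain ⟨c, hc, y, hy, hyθ⟩ := exists_speed hr hq (pconj_mul_one_div S.hp) S.hθ0 S.hθ1 S.hh
    (fun v hv => (hhpos v hv).le) (fun v hv => S.source_nonneg hv) (fun v hv => S.source_pos hv)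
    hG S.hH.continuousOn (fun v hv => S.hasDerivAt hv) hH0
    (S.rpow_lt_primitive (hHpos 1 (by simp)) hmain)
  have hca := hadm c (hmin.trans hc)
  refine ⟨c, hmin.trans hc, (hy.isFOSol S hca hyθ).exists_isTWSol S, ?_, hc, hmin⟩
  rintro d hd ⟨u, hu⟩
  have hda := hadm d hd
  obtain ⟨x, hx⟩ := exists_isBackwardSol hr hq0 S.hh (fun v hv => (hda v hv).le) hG
  exact hx.speed_unique hr hq0 S.hθ0 S.hθ1 hy (fun v hv => (hda v hv).le)
    (fun v hv => (hca v hv).le) (S.linear_add_pos hda hθ).le (S.linear_add_pos hca hθ).le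
    (hu.backwardSol_eq S hda hx) hyθ
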